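/- Let k be an algebraically closed field of characteristic 3, let d ≥ 2, let A = k[[x_0,…,x_d]] be the formal power series ring with maximal ideal 𝔪 (the ideal generated by the variables), and let F ∈ 𝔪² with F ≠ 0 (so A/(F) is a non-regular hypersurface ring of dimension d). Then either there is a ring isomorphism A/(F) ≅ A/(x_0² + x_1² + ⋯ + x_d²), or the liminf as e → ∞ of the real sequence e ↦ dim_k( A/((F) + (x_0^{3^e},…,x_d^{3^e})) ) / 3^{d·e} is at least 1 + (2/3)^{d−1}. (Here 1 + (2/3)^{d−1} = e_HK(S_{3,d}), the Hilbert–Kunz multiplicity of the A_2 singularity in characteristic 3, which strictly exceeds e_HK(R_{3,d}).) -/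

import Mathlib

open MvPowerSeries

/-- The Hilbert–Kunz function of the hypersurface `A/(F)`, where
`A = k[[x_0,…,x_d]]`, in characteristic `p`, at level `e`:
`dim_k A/((F) + (x_0^{p^e},…,x_d^{p^e}))`. -/
noncomputable def HKps (k : Type*) [Field k] (d p e : ℕ)
    (F : MvPowerSeries (Fin (d + 1)) k) : ℕ :=
  Module.finrank k
    (MvPowerSeries (Fin (d + 1)) k ⧸
      Ideal.span
        ({F} ∪ Set.range
          (fun i : Fin (d + 1) => (X i : MvPowerSeries (Fin (d + 1)) k) ^ p ^ e)))

/-!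
Write `F = xᵀ a x` with `a` symmetric. If `a` is invertible then `a = PᵀP`, and the automorphism
`x ↦ P x` carries the `A₁` form `∑ xᵢ²` to `F`.

Otherwise, after a change of coordinates `y` of `x`, the first column of `a` vanishes modulo `𝔪`.
Adding a generic multiple of `∑_{i≥1} yᵢ²` to `F` does not increase `HK₁(F)` and makes the block of
`a` complementary to the first row and column invertible. Completing the square then gives
`F = ∑ uᵢ² + g y₀²` with `g = h₀ y₀ + ∑ hᵢ uᵢ ∈ 𝔪`, and `wᵢ = uᵢ + hᵢ y₀² / 2` satisfies
`F ≡ ∑ wᵢ²` modulo `y₀³ ∈ 𝔪^[3]`. Hence `HK₁(F) ≥ HK₁(∑_{i≥1} xᵢ²) ≥ 3 (3^(d-1) + 2^(d-1))`.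

By flatness of Frobenius `HK_e(F) / 3^(de)` is nondecreasing in `e`, so its value at `e = 1` bounds
the limit from below.
-/

namespace HilbertKunz

/-! ### The ideals generated by powers of the variables -/

section VariableIdeals

variable (σ R : Type*) [CommRing R]

/-- The ideal `(x_i : i ∈ σ)` of the power series ring. -/
noncomputable def idealOfVars : Ideal (MvPowerSeries σ R) :=
  Ideal.span (Set.range X)

/-- The ideal `(x_i ^ q : i ∈ σ)`; for `q` a power of the characteristic it is the `q`-th Frobenius
power of the ideal of variables. -/
noncomputable def idealOfVarPows (q : ℕ) : Ideal (MvPowerSeries σ R) :=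
  Ideal.span (Set.range fun i => X i ^ q)

variable {σ R}

lemma X_mem_idealOfVars (i : σ) : (X i : MvPowerSeries σ R) ∈ idealOfVars σ R :=
  Ideal.subset_span ⟨i, rfl⟩

lemma X_pow_mem_idealOfVarPows (q : ℕ) (i : σ) :
    (X i ^ q : MvPowerSeries σ R) ∈ idealOfVarPows σ R q :=
  Ideal.subset_span ⟨i, rfl⟩

lemma idealOfVarPows_one : idealOfVarPows σ R 1 = idealOfVars σ R := by
  simp only [idealOfVarPows, idealOfVars, pow_one]

lemma exists_eq_sum_X_pow_mul [Fintype σ] {q : ℕ} {f : MvPowerSeries σ R}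
    (hf : ∀ m, coeff m f ≠ 0 → ∃ i, q ≤ m i) :
    ∃ g : σ → MvPowerSeries σ R, f = ∑ i, X i ^ q * g i ∧
      ∀ i m, coeff m (g i) = 0 ∨ coeff m (g i) = coeff (m + Finsupp.single i q) f := by
  classical
  choose idx hidx using hf
  let part (i : σ) (m : σ →₀ ℕ) : R := if ∃ hm, idx m hm = i then coeff m f else 0
  let g (i : σ) : MvPowerSeries σ R := fun m => part i (m + Finsupp.single i q)
  have coeff_mul_g (i : σ) (m : σ →₀ ℕ) : coeff m (X i ^ q * g i) = part i m := by
    rw [X_pow_eq, coeff_monomial_mul, one_mul]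
    split_ifs with hle
    · change part i (m - Finsupp.single i q + Finsupp.single i q) = part i m
      rw [tsub_add_cancel_of_le hle]
    · refine (if_neg ?_).symm
      rintro ⟨hm, rfl⟩
      exact hle (Finsupp.single_le_iff.mpr (hidx m hm))
  refine ⟨g, ?_, fun i m => ?_⟩
  · ext m
    rw [map_sum]
    simp only [coeff_mul_g, part]
    by_cases hm : coeff m f = 0
    · simp [hm]
    · simp [hm]
  · change part i _ = 0 ∨ part i _ = _
    dsimp only [part]
    split_ifs <;> simp

variable [Finite σ]

lemma mem_idealOfVarPows {q : ℕ} {f : MvPowerSeries σ R} :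
    f ∈ idealOfVarPows σ R q ↔ ∀ m : σ →₀ ℕ, (∀ i, m i < q) → coeff m f = 0 := by
  cases nonempty_fintype σ
  constructor
  · intro hf m hm
    obtain ⟨c, rfl⟩ := Ideal.mem_span_range_iff_exists_fun.mp hf
    rw [map_sum]
    exact Finset.sum_eq_zero fun i _ => X_pow_dvd_iff.mp (Dvd.intro_left (c i) rfl) m (hm i)
  · intro hf
    obtain ⟨g, hfg, -⟩ := exists_eq_sum_X_pow_mul (q := q) (f := f) fun m hm => by
      contrapose! hm
      exact hf m hm
    rw [hfg]
    exact Ideal.sum_mem _ fun i _ => Ideal.mul_mem_right _ _ (X_pow_mem_idealOfVarPows q i)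

lemma mem_idealOfVars {f : MvPowerSeries σ R} : f ∈ idealOfVars σ R ↔ constantCoeff f = 0 := by
  simp_rw [← idealOfVarPows_one, mem_idealOfVarPows, Nat.lt_one_iff]
  refine ⟨fun h => h 0 fun _ => rfl, fun h m hm => ?_⟩
  rwa [show m = 0 from Finsupp.ext hm]

lemma idealOfVars_eq_maximalIdeal (k : Type*) [Field k] :
    idealOfVars σ k = IsLocalRing.maximalIdeal (MvPowerSeries σ k) := by
  ext f
  rw [mem_idealOfVars, IsLocalRing.mem_maximalIdeal, mem_nonunits_iff, isUnit_iff_constantCoeff,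
    isUnit_iff_ne_zero, not_not]

lemma mem_idealOfVars_pow {N : ℕ} {f : MvPowerSeries σ R} :
    f ∈ idealOfVars σ R ^ N ↔ ∀ m : σ →₀ ℕ, m.degree < N → coeff m f = 0 := by
  cases nonempty_fintype σ
  constructor
  · intro hf m hm
    suffices hN : (N : ℕ∞) ≤ f.order from
      coeff_of_lt_order (lt_of_lt_of_le (by exact_mod_cast hm) hN)
    clear hm
    induction N generalizing f with
    | zero => simp
    | succ N ih =>
      rw [pow_succ] at hf
      refine Submodule.mul_induction_on hf (fun a ha b hb => ?_) fun a b ha hb =>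
        (le_min ha hb).trans min_order_le_add
      rw [Nat.cast_succ]
      exact (add_le_add (ih ha) (one_le_order_iff_constCoeff_eq_zero.mpr
        (mem_idealOfVars.mp hb))).trans le_order_mul
  · intro hf
    induction N generalizing f with
    | zero => simp
    | succ N ih =>
      obtain ⟨g, hfg, hg⟩ := exists_eq_sum_X_pow_mul (q := 1) (f := f) fun m hm => by
        contrapose! hm
        refine hf m ?_
        rw [show m = 0 from Finsupp.ext fun i => Nat.lt_one_iff.mp (hm i)]
        simp
      rw [hfg, pow_succ']
      refine Ideal.sum_mem _ fun i _ => Ideal.mul_mem_mul ?_ (ih fun m hm => ?_)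
      · rw [pow_one]
        exact X_mem_idealOfVars i
      · rcases hg i m with h | h
        · exact h
        · rw [h]
          refine hf _ ?_
          simpa using hm

instance isAdicComplete_idealOfVars :
    IsAdicComplete (idealOfVars σ R) (MvPowerSeries σ R) where
  haus' f hf := by
    ext m
    have hmem := hf (m.degree + 1)
    rw [SModEq.zero, smul_eq_mul, Ideal.mul_top] at hmem
    exact mem_idealOfVars_pow.mp hmem m (Nat.lt_succ_self _)
  prec' f hf := by
    let limit : MvPowerSeries σ R := fun m => coeff m (f (m.degree + 1))
    refine ⟨limit, fun N => ?_⟩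
    rw [SModEq.sub_mem, smul_eq_mul, Ideal.mul_top]
    refine mem_idealOfVars_pow.mpr fun m hm => ?_
    have hcauchy := hf (Nat.succ_le_of_lt hm)
    rw [SModEq.sub_mem, smul_eq_mul, Ideal.mul_top] at hcauchy
    have hcoeff := mem_idealOfVars_pow.mp hcauchy m (Nat.lt_succ_self _)
    rw [map_sub, sub_eq_zero] at hcoeff ⊢
    exact hcoeff.symm

lemma isSquare_of_isSquare_constantCoeff (htwo : IsUnit (2 : R)) {f : MvPowerSeries σ R}
    (hunit : IsUnit (constantCoeff f)) (hsq : IsSquare (constantCoeff f)) : IsSquare f := by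
  obtain ⟨r, hr⟩ := hsq
  have hr_unit : IsUnit r := isUnit_of_mul_isUnit_left (hr ▸ hunit)
  have hderiv : IsUnit (2 * C r : MvPowerSeries σ R) := by
    rw [isUnit_iff_constantCoeff, map_mul, map_ofNat, constantCoeff_C]
    exact htwo.mul hr_unit
  obtain ⟨s, hs, -⟩ := HenselianRing.is_henselian (I := idealOfVars σ R)
    (Polynomial.X ^ 2 - Polynomial.C f) (Polynomial.monic_X_pow_sub_C _ two_ne_zero) (C r)
    (mem_idealOfVars.mpr (by simp [hr, sq]))
    (by simpa [one_add_one_eq_two] using hderiv.map (Ideal.Quotient.mk (idealOfVars σ R)))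
  refine ⟨s, ?_⟩
  simpa [Polynomial.IsRoot, sub_eq_zero, sq, eq_comm] using hs

end VariableIdeals

section Automorphisms

lemma ringHom_injective_of_surjective {R : Type*} [CommRing R] [IsNoetherianRing R] (φ : R →+* R)
    (hφ : Function.Surjective φ) : Function.Injective φ := by
  have hpow (N : ℕ) : Function.Surjective (φ ^ N : R →+* R) := by
    rw [RingHom.coe_pow]
    exact hφ.iterate N
  have hmono : Monotone fun N : ℕ => RingHom.ker (φ ^ N : R →+* R) :=
    monotone_nat_of_le_succ fun N x (hx : (φ ^ N) x = 0) => by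
      rw [RingHom.mem_ker, pow_succ', RingHom.mul_def, RingHom.comp_apply, hx, map_zero]
  obtain ⟨N, hN⟩ := monotone_stabilizes_iff_noetherian.mpr
    (inferInstance : IsNoetherian R R) ⟨_, hmono⟩
  refine (injective_iff_map_eq_zero φ).mpr fun x hx => ?_
  obtain ⟨z, rfl⟩ := hpow N x
  have hz : z ∈ RingHom.ker (φ ^ (N + 1)) := by
    rwa [RingHom.mem_ker, pow_succ', RingHom.mul_def, RingHom.comp_apply]
  have hker : RingHom.ker (φ ^ N) = RingHom.ker (φ ^ (N + 1)) := hN (N + 1) N.le_succ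
  rwa [← hker] at hz

variable {σ R : Type*} [Finite σ] [CommRing R] [IsNoetherianRing R]

lemma exists_algEquiv_X_eq {y : σ → MvPowerSeries σ R}
    (hy : Ideal.span (Set.range y) = idealOfVars σ R) :
    ∃ φ : MvPowerSeries σ R ≃ₐ[R] MvPowerSeries σ R, ∀ i, φ (X i) = y i := by
  have hsubst : HasSubst y := hasSubst_of_constantCoeff_zero fun i =>
    mem_idealOfVars.mp (hy ▸ Ideal.subset_span ⟨i, rfl⟩)
  let φ := substAlgHom (R := R) hsubst
  have hφX (i : σ) : φ (X i) = y i := substAlgHom_X hsubst i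
  have hmap : (idealOfVars σ R).map (φ : MvPowerSeries σ R →+* MvPowerSeries σ R) =
      idealOfVars σ R := by
    conv_lhs => rw [idealOfVars, Ideal.map_span, ← Set.range_comp]
    rw [← hy]
    exact congrArg (fun z => Ideal.span (Set.range z)) (funext hφX)
  have hhaus : IsHausdorff ((idealOfVars σ R).map
      (φ : MvPowerSeries σ R →+* MvPowerSeries σ R)) (MvPowerSeries σ R) := by
    rw [hmap]
    infer_instance
  have hsurj : Function.Surjective (φ : MvPowerSeries σ R →+* MvPowerSeries σ R) := by
    refine surjective_of_mk_map_comp_surjective (I := idealOfVars σ R) _ fun z => ?_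
    obtain ⟨f, rfl⟩ := Ideal.Quotient.mk_surjective z
    refine ⟨C (constantCoeff f), ?_⟩
    rw [RingHom.comp_apply, Ideal.Quotient.eq, hmap, mem_idealOfVars,
      show (φ : MvPowerSeries σ R →+* MvPowerSeries σ R) (C (constantCoeff f)) =
        C (constantCoeff f) from φ.commutes _]
    simp
  exact ⟨AlgEquiv.ofBijective φ ⟨ringHom_injective_of_surjective _ hsurj, hsurj⟩, hφX⟩

end Automorphisms

/-! ### The truncated power series ring -/

section Truncation

variable {σ R : Type*} [Fintype σ] [CommRing R] {q : ℕ}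

/-- The exponents `m` with `m i < q` for all `i`, which index the monomial basis of the power series
ring modulo `idealOfVarPows σ R q`. -/
noncomputable def boxExponent (m : σ → Fin q) : σ →₀ ℕ :=
  Finsupp.equivFunOnFinite.symm fun i => m i

@[simp]
lemma boxExponent_apply (m : σ → Fin q) (i : σ) : boxExponent m i = m i := rfl

lemma boxExponent_injective : Function.Injective (boxExponent : (σ → Fin q) → σ →₀ ℕ) :=
  fun _ _ h => funext fun i => Fin.ext (DFunLike.congr_fun h i)

lemma exists_boxExponent_eq {m : σ →₀ ℕ} (hm : ∀ i, m i < q) :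
    ∃ b : σ → Fin q, boxExponent b = m :=
  ⟨fun i => ⟨m i, hm i⟩, Finsupp.ext fun _ => rfl⟩

variable (σ R q) in
/-- The coefficients of a power series at the exponents below `q`. -/
noncomputable def boxCoeff : MvPowerSeries σ R →ₗ[R] ((σ → Fin q) → R) :=
  LinearMap.pi fun m => coeff (boxExponent m)

variable (σ R q) in
open Classical in
/-- The polynomial with prescribed coefficients at the exponents below `q`. -/
noncomputable def boxSeries : ((σ → Fin q) → R) →ₗ[R] MvPowerSeries σ R :=
  ∑ m, monomial (boxExponent m) ∘ₗ LinearMap.proj m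

@[simp]
lemma boxCoeff_apply (f : MvPowerSeries σ R) (m : σ → Fin q) :
    boxCoeff σ R q f m = coeff (boxExponent m) f := rfl

open Classical in
lemma boxSeries_apply (g : (σ → Fin q) → R) :
    boxSeries σ R q g = ∑ m, monomial (boxExponent m) (g m) := by
  simp [boxSeries]

lemma boxCoeff_boxSeries (g : (σ → Fin q) → R) : boxCoeff σ R q (boxSeries σ R q g) = g := by
  classical
  ext m
  simp [boxSeries_apply, coeff_monomial, boxExponent_injective.eq_iff]

lemma lt_of_coeff_boxSeries_ne_zero {g : (σ → Fin q) → R} {m : σ →₀ ℕ}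
    (hm : coeff m (boxSeries σ R q g) ≠ 0) (i : σ) : m i < q := by
  classical
  rw [boxSeries_apply, map_sum] at hm
  obtain ⟨b, -, hb⟩ := Finset.exists_ne_zero_of_sum_ne_zero hm
  rw [coeff_monomial] at hb
  rw [(ite_ne_right_iff.mp hb).1]
  exact (b i).isLt

lemma ker_boxCoeff :
    LinearMap.ker (boxCoeff σ R q) = (idealOfVarPows σ R q).restrictScalars R := by
  ext f
  rw [LinearMap.mem_ker, Submodule.restrictScalars_mem, mem_idealOfVarPows]
  constructor
  · intro hf m hm
    obtain ⟨b, rfl⟩ := exists_boxExponent_eq hm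
    exact congrFun hf b
  · exact fun hf => funext fun m => hf _ fun i => (m i).isLt

lemma boxCoeff_surjective : Function.Surjective (boxCoeff σ R q) :=
  fun g => ⟨boxSeries σ R q g, boxCoeff_boxSeries g⟩

lemma mk_boxSeries_boxCoeff (f : MvPowerSeries σ R) :
    Ideal.Quotient.mk (idealOfVarPows σ R q) (boxSeries σ R q (boxCoeff σ R q f)) =
      Ideal.Quotient.mk (idealOfVarPows σ R q) f := by
  rw [Ideal.Quotient.eq, ← Submodule.restrictScalars_mem R, ← ker_boxCoeff, LinearMap.mem_ker,
    map_sub, boxCoeff_boxSeries, sub_self]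

variable (σ R q) in
/-- The monomials with exponents below `q` form a basis of the truncated power series ring. -/
noncomputable def boxEquiv :
    (MvPowerSeries σ R ⧸ idealOfVarPows σ R q) ≃ₗ[R] ((σ → Fin q) → R) :=
  (Submodule.Quotient.restrictScalarsEquiv R _).symm ≪≫ₗ
    Submodule.quotEquivOfEq _ _ ker_boxCoeff.symm ≪≫ₗ
      (boxCoeff σ R q).quotKerEquivOfSurjective boxCoeff_surjective

lemma finrank_quotient_idealOfVarPows [StrongRankCondition R] :
    Module.finrank R (MvPowerSeries σ R ⧸ idealOfVarPows σ R q) = q ^ Fintype.card σ := by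
  classical
  rw [(boxEquiv σ R q).finrank_eq]
  simp

end Truncation

instance finite_quotient_idealOfVarPows {σ R : Type*} [Finite σ] [CommRing R] {q : ℕ} :
    Module.Finite R (MvPowerSeries σ R ⧸ idealOfVarPows σ R q) := by
  classical
  cases nonempty_fintype σ
  exact Module.Finite.equiv (boxEquiv σ R q).symm

section FiniteDimensionalAlgebra

variable {k B : Type*} [Field k] [CommRing B] [Algebra k B]

lemma range_mulLeft_eq_span_singleton (b : B) :
    LinearMap.range (LinearMap.mulLeft k b) = (Ideal.span {b}).restrictScalars k := by
  ext x
  simp [Ideal.mem_span_singleton, Dvd.dvd, eq_comm]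

variable [Module.Finite k B]

lemma finrank_quotient_span_singleton_add_finrank_range (b : B) :
    Module.finrank k (B ⧸ Ideal.span {b}) +
      Module.finrank k (LinearMap.range (LinearMap.mulLeft k b)) = Module.finrank k B := by
  rw [← Submodule.finrank_quotient_add_finrank (LinearMap.range (LinearMap.mulLeft k b)),
    range_mulLeft_eq_span_singleton,
    (Submodule.Quotient.restrictScalarsEquiv k (Ideal.span {b})).finrank_eq]

lemma finrank_quotient_span_singleton (b : B) :
    Module.finrank k (B ⧸ Ideal.span {b}) =
      Module.finrank k (LinearMap.ker (LinearMap.mulLeft k b)) := by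
  have hcoker := finrank_quotient_span_singleton_add_finrank_range (k := k) b
  have hker := (LinearMap.mulLeft k b).finrank_range_add_finrank_ker
  lia

lemma finrank_ker_comp_le {U V W : Type*} [AddCommGroup U] [Module k U] [Module.Finite k U]
    [AddCommGroup V] [Module k V] [Module.Finite k V] [AddCommGroup W] [Module k W]
    (S : V →ₗ[k] W) (T : U →ₗ[k] V) :
    Module.finrank k (LinearMap.ker (S ∘ₗ T)) ≤
      Module.finrank k (LinearMap.ker S) + Module.finrank k (LinearMap.ker T) := by
  let T' := T.domRestrict (LinearMap.ker (S ∘ₗ T))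
  have hrange : Module.finrank k (LinearMap.range T') ≤ Module.finrank k (LinearMap.ker S) := by
    refine Submodule.finrank_mono ?_
    rintro _ ⟨x, rfl⟩
    exact x.2
  have hker : Module.finrank k (LinearMap.ker T') ≤ Module.finrank k (LinearMap.ker T) := by
    rw [← Submodule.finrank_map_subtype_eq]
    refine Submodule.finrank_mono ?_
    rintro _ ⟨x, hx, rfl⟩
    exact hx
  have := T'.finrank_range_add_finrank_ker
  lia

lemma finrank_quotient_span_singleton_mul_le (b c : B) :
    Module.finrank k (B ⧸ Ideal.span {b * c}) ≤
      Module.finrank k (B ⧸ Ideal.span {b}) + Module.finrank k (B ⧸ Ideal.span {c}) := by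
  rw [finrank_quotient_span_singleton, finrank_quotient_span_singleton,
    finrank_quotient_span_singleton, LinearMap.mulLeft_mul]
  exact finrank_ker_comp_le _ _

end FiniteDimensionalAlgebra

/-! ### Hilbert–Kunz numbers -/

section HilbertKunzNumber

variable {σ k : Type*} [Field k] {q : ℕ}

/-- The colength `dim_k k⟦x⟧ / ((F) + (x_i ^ q : i ∈ σ))`. Unlike in `HKps`, the exponent `q` is
arbitrary and any finite set of variables is allowed. -/
noncomputable def hkNumber (q : ℕ) (F : MvPowerSeries σ k) : ℕ :=
  Module.finrank k (MvPowerSeries σ k ⧸ (idealOfVarPows σ k q ⊔ Ideal.span {F}))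

lemma HKps_eq_hkNumber (d p e : ℕ) (F : MvPowerSeries (Fin (d + 1)) k) :
    HKps k d p e F = hkNumber (p ^ e) F := by
  rw [HKps, hkNumber, idealOfVarPows, ← Ideal.span_union, Set.union_comm]

/-- Multiplication by `F` on the truncated power series ring. -/
noncomputable def truncMul (q : ℕ) (F : MvPowerSeries σ k) :
    Module.End k (MvPowerSeries σ k ⧸ idealOfVarPows σ k q) :=
  LinearMap.mulLeft k (Ideal.Quotient.mk (idealOfVarPows σ k q) F)

lemma truncMul_mk (F f : MvPowerSeries σ k) :
    truncMul q F (Ideal.Quotient.mk _ f) = Ideal.Quotient.mk _ (F * f) := by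
  rw [truncMul, LinearMap.mulLeft_apply, map_mul]

/-- The quotient defining `hkNumber` is a quotient of the truncated power series ring. -/
noncomputable def quotientEquivTrunc (q : ℕ) (F : MvPowerSeries σ k) :
    ((MvPowerSeries σ k ⧸ idealOfVarPows σ k q) ⧸
        Ideal.span {Ideal.Quotient.mk (idealOfVarPows σ k q) F}) ≃ₐ[k]
      MvPowerSeries σ k ⧸ (idealOfVarPows σ k q ⊔ Ideal.span {F}) :=
  (Ideal.quotientEquivAlgOfEq k (by rw [Ideal.map_span, Set.image_singleton]; rfl)).trans
    (DoubleQuot.quotQuotEquivQuotSupₐ k (idealOfVarPows σ k q) (Ideal.span {F}))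

lemma hkNumber_eq_finrank (q : ℕ) (F : MvPowerSeries σ k) :
    hkNumber q F = Module.finrank k ((MvPowerSeries σ k ⧸ idealOfVarPows σ k q) ⧸
      Ideal.span {Ideal.Quotient.mk (idealOfVarPows σ k q) F}) :=
  (quotientEquivTrunc q F).toLinearEquiv.finrank_eq.symm

lemma hkNumber_congr {F G : MvPowerSeries σ k} (hFG : F - G ∈ idealOfVarPows σ k q) :
    hkNumber q F = hkNumber q G := by
  rw [hkNumber_eq_finrank, hkNumber_eq_finrank, Ideal.Quotient.eq.mpr hFG]

lemma hkNumber_add_finrank_range [Fintype σ] (q : ℕ) (F : MvPowerSeries σ k) :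
    hkNumber q F + Module.finrank k (LinearMap.range (truncMul q F)) = q ^ Fintype.card σ := by
  rw [hkNumber_eq_finrank, truncMul, finrank_quotient_span_singleton_add_finrank_range,
    finrank_quotient_idealOfVarPows]

variable [Finite σ]

instance finite_quotient_sup (q : ℕ) (F : MvPowerSeries σ k) :
    Module.Finite k (MvPowerSeries σ k ⧸ (idealOfVarPows σ k q ⊔ Ideal.span {F})) :=
  Module.Finite.equiv (quotientEquivTrunc q F).toLinearEquiv

lemma hkNumber_mul_le (q : ℕ) (F G : MvPowerSeries σ k) :
    hkNumber q (F * G) ≤ hkNumber q F + hkNumber q G := by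
  rw [hkNumber_eq_finrank, hkNumber_eq_finrank, hkNumber_eq_finrank, map_mul]
  exact finrank_quotient_span_singleton_mul_le _ _

lemma hkNumber_pow_le (q m : ℕ) (F : MvPowerSeries σ k) :
    hkNumber q (F ^ m) ≤ m * hkNumber q F := by
  induction m with
  | zero =>
    rw [pow_zero, hkNumber, Ideal.span_singleton_one, sup_top_eq, zero_mul]
    have := Ideal.Quotient.subsingleton_iff.mpr (rfl : (⊤ : Ideal (MvPowerSeries σ k)) = ⊤)
    exact (Module.finrank_zero_of_subsingleton).le
  | succ m ih =>
    calc hkNumber q (F ^ (m + 1)) ≤ hkNumber q (F ^ m) + hkNumber q F := by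
          rw [pow_succ]
          exact hkNumber_mul_le q _ _
      _ ≤ (m + 1) * hkNumber q F := by linarith

lemma finrank_le_hkNumber {F : MvPowerSeries σ k} {W : Type*} [AddCommGroup W] [Module k W]
    (L : MvPowerSeries σ k →ₗ[k] W) (hL : Function.Surjective L) (hLF : ∀ f, L (F * f) = 0)
    (hLI : ∀ f ∈ idealOfVarPows σ k q, L f = 0) :
    Module.finrank k W ≤ hkNumber q F := by
  have hker : (idealOfVarPows σ k q ⊔ Ideal.span {F}).restrictScalars k ≤ LinearMap.ker L := by
    intro f hf
    obtain ⟨g, hg, h, hh, rfl⟩ := Submodule.mem_sup.mp hf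
    obtain ⟨c, rfl⟩ := Ideal.mem_span_singleton.mp hh
    rw [LinearMap.mem_ker, map_add, hLI g hg, hLF, add_zero]
  let L' := Submodule.liftQ _ L hker ∘ₗ
    (Submodule.Quotient.restrictScalarsEquiv k
      (idealOfVarPows σ k q ⊔ Ideal.span {F})).symm.toLinearMap
  refine LinearMap.finrank_le_finrank_of_surjective (f := L') fun w => ?_
  obtain ⟨f, rfl⟩ := hL w
  exact ⟨Ideal.Quotient.mk _ f, rfl⟩

end HilbertKunzNumber

section Frobenius

variable {σ k : Type*} [Finite σ] [Field k] (p : ℕ) [Fact p.Prime] [CharP k p]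

lemma pow_mem_idealOfVarPows (e : ℕ) {f : MvPowerSeries σ k} (hf : f ∈ idealOfVars σ k) :
    f ^ p ^ e ∈ idealOfVarPows σ k (p ^ e) := by
  have : CharP (MvPowerSeries σ k) p :=
    charP_of_injective_algebraMap (algebraMap k (MvPowerSeries σ k)).injective p
  cases nonempty_fintype σ
  obtain ⟨c, rfl⟩ := Ideal.mem_span_range_iff_exists_fun.mp hf
  rw [sum_pow_char_pow]
  refine Ideal.sum_mem _ fun i _ => ?_
  rw [mul_pow]
  exact Ideal.mul_mem_left _ _ (X_pow_mem_idealOfVarPows _ i)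

lemma map_idealOfVarPows_le (e : ℕ) (φ : MvPowerSeries σ k ≃ₐ[k] MvPowerSeries σ k) :
    (idealOfVarPows σ k (p ^ e)).map φ ≤ idealOfVarPows σ k (p ^ e) := by
  rw [idealOfVarPows, Ideal.map_span, Ideal.span_le]
  rintro _ ⟨_, ⟨i, rfl⟩, rfl⟩
  rw [map_pow]
  refine pow_mem_idealOfVarPows p e ?_
  have hX := X_mem_idealOfVars (R := k) i
  rw [idealOfVars_eq_maximalIdeal, IsLocalRing.mem_maximalIdeal, mem_nonunits_iff] at hX ⊢
  rwa [MulEquiv.isUnit_map]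

lemma map_idealOfVarPows (e : ℕ) (φ : MvPowerSeries σ k ≃ₐ[k] MvPowerSeries σ k) :
    (idealOfVarPows σ k (p ^ e)).map φ = idealOfVarPows σ k (p ^ e) := by
  refine le_antisymm (map_idealOfVarPows_le p e φ) fun f hf => ?_
  rw [← φ.apply_symm_apply f]
  exact Ideal.mem_map_of_mem φ (map_idealOfVarPows_le p e φ.symm (Ideal.mem_map_of_mem φ.symm hf))

lemma hkNumber_algEquiv (e : ℕ) (φ : MvPowerSeries σ k ≃ₐ[k] MvPowerSeries σ k)
    (F : MvPowerSeries σ k) : hkNumber (p ^ e) (φ F) = hkNumber (p ^ e) F := by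
  have hmap : idealOfVarPows σ k (p ^ e) ⊔ Ideal.span {φ F} =
      (idealOfVarPows σ k (p ^ e) ⊔ Ideal.span {F}).map
        (φ : MvPowerSeries σ k →+* MvPowerSeries σ k) := by
    rw [Ideal.map_sup, Ideal.map_span, Set.image_singleton]
    exact congrArg (· ⊔ _) (map_idealOfVarPows p e φ).symm
  exact (Ideal.quotientEquivAlg _ _ φ hmap).toLinearEquiv.finrank_eq.symm

end Frobenius

section BaseChange

variable {σ k K : Type*} [Field k] [Field K] (φ : k →+* K)

lemma idealOfVarPows_le_comap_map (q : ℕ) :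
    idealOfVarPows σ k q ≤ (idealOfVarPows σ K q).comap (map φ) := by
  rw [idealOfVarPows, Ideal.span_le]
  rintro _ ⟨i, rfl⟩
  simpa using X_pow_mem_idealOfVarPows q i

/-- The map of truncated power series rings induced by a field homomorphism `φ`. -/
noncomputable def truncMap (q : ℕ) :
    (MvPowerSeries σ k ⧸ idealOfVarPows σ k q) →ₛₗ[φ] MvPowerSeries σ K ⧸ idealOfVarPows σ K q where
  __ := Ideal.quotientMap (idealOfVarPows σ K q) (map φ) (idealOfVarPows_le_comap_map φ q)
  map_smul' c x := by
    obtain ⟨f, rfl⟩ := Ideal.Quotient.mk_surjective x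
    change Ideal.Quotient.mk _ (map φ (c • f)) = Ideal.Quotient.mk _ (φ c • map φ f)
    simp only [smul_eq_C_mul, map_mul, map_C]

lemma truncMap_mk (q : ℕ) (f : MvPowerSeries σ k) :
    truncMap φ q (Ideal.Quotient.mk _ f) = Ideal.Quotient.mk _ (map φ f) := rfl

lemma truncMul_map_mk_monomial (q : ℕ) (F : MvPowerSeries σ k) (m : σ →₀ ℕ) (c : K) :
    truncMul q (map φ F) (Ideal.Quotient.mk _ (monomial m c)) =
      c • truncMap φ q (truncMul q F (Ideal.Quotient.mk _ (monomial m 1))) := by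
  have hmonomial : monomial m c = c • map φ (monomial m 1) := by
    rw [map_monomial, map_one, ← map_smul, smul_eq_mul, mul_one]
  rw [hmonomial, truncMul_mk, truncMul_mk, truncMap_mk, mul_smul_comm, map_mul (map φ)]
  rfl

variable [Finite σ]

lemma finrank_range_truncMul_map_le (q : ℕ) (F : MvPowerSeries σ k) :
    Module.finrank K (LinearMap.range (truncMul q (map φ F))) ≤
      Module.finrank k (LinearMap.range (truncMul q F)) := by
  cases nonempty_fintype σ
  let v := Module.finBasis k (LinearMap.range (truncMul q F))
  let S := Submodule.span K (Set.range fun j => truncMap φ q (v j).1)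
  have truncMap_mem (x : LinearMap.range (truncMul q F)) : truncMap φ q x ∈ S := by
    rw [← v.sum_repr x, AddSubmonoidClass.coe_finsetSum, map_sum]
    refine Submodule.sum_mem _ fun j _ => ?_
    rw [SetLike.val_smul, map_smulₛₗ]
    exact S.smul_mem _ (Submodule.subset_span ⟨j, rfl⟩)
  have range_le : LinearMap.range (truncMul q (map φ F)) ≤ S := by
    rintro _ ⟨y, rfl⟩
    obtain ⟨f, rfl⟩ := Ideal.Quotient.mk_surjective y
    rw [← mk_boxSeries_boxCoeff, boxSeries_apply, map_sum, map_sum]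
    refine Submodule.sum_mem _ fun m _ => ?_
    rw [truncMul_map_mk_monomial]
    exact S.smul_mem _ (truncMap_mem ⟨_, LinearMap.mem_range_self _ _⟩)
  calc Module.finrank K (LinearMap.range (truncMul q (map φ F)))
      ≤ Module.finrank K S := Submodule.finrank_mono range_le
    _ ≤ Fintype.card (Fin (Module.finrank k (LinearMap.range (truncMul q F)))) :=
        finrank_range_le_card _
    _ = Module.finrank k (LinearMap.range (truncMul q F)) := Fintype.card_fin _

lemma hkNumber_le_hkNumber_map (q : ℕ) (F : MvPowerSeries σ k) :
    hkNumber q F ≤ hkNumber q (map φ F) := by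
  cases nonempty_fintype σ
  have hk := hkNumber_add_finrank_range q F
  have hK := hkNumber_add_finrank_range q (map φ F)
  have := finrank_range_truncMul_map_le φ q F
  lia

end BaseChange

section Expand

variable {σ R : Type*} [CommRing R] [Fintype σ] {p : ℕ}

/-- The coefficient series `f_α` in the decomposition `f = ∑ x ^ α * f_α(x_i ^ p)`, where `α` runs
over the exponents below `p`. -/
noncomputable def expandPart (α : σ → Fin p) : MvPowerSeries σ R →ₗ[R] MvPowerSeries σ R where
  toFun f := fun m => coeff (p • m + boxExponent α) f
  map_add' f g := funext fun m => map_add (coeff (p • m + boxExponent α)) f g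
  map_smul' c f := funext fun m => map_smul (coeff (p • m + boxExponent α)) c f

lemma coeff_expandPart (α : σ → Fin p) (f : MvPowerSeries σ R) (m : σ →₀ ℕ) :
    coeff m (expandPart α f) = coeff (p • m + boxExponent α) f := rfl

lemma exists_nsmul_of_add_eq {α : σ → Fin p} {a b m : σ →₀ ℕ}
    (hab : a + b = p • m + boxExponent α) (ha : ∀ i, p ∣ a i) :
    ∃ c, c ≤ m ∧ p • c = a ∧ p • (m - c) + boxExponent α = b := by
  choose c hc using ha
  have hab' (i : σ) : p * c i + b i = p * m i + α i := by
    simpa [hc i] using DFunLike.congr_fun hab i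
  have hle (i : σ) : c i ≤ m i := by
    have hα := (α i).isLt
    by_contra! hlt
    nlinarith [hab' i, Nat.mul_le_mul_left p hlt]
  refine ⟨Finsupp.equivFunOnFinite.symm c, hle, Finsupp.ext fun i => (hc i).symm,
    Finsupp.ext fun i => ?_⟩
  have := hab' i
  have := Nat.mul_le_mul_left p (hle i)
  simp only [Finsupp.add_apply, Finsupp.smul_apply, Finsupp.tsub_apply, smul_eq_mul,
    boxExponent_apply, Finsupp.equivFunOnFinite_symm_apply_apply, Nat.mul_sub]
  lia

lemma expandPart_expand_mul (hp : p ≠ 0) (α : σ → Fin p) (h f : MvPowerSeries σ R) :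
    expandPart α (expand p hp h * f) = h * expandPart α f := by
  classical
  ext m
  rw [coeff_expandPart, coeff_mul, coeff_mul]
  symm
  refine Finset.sum_of_injOn (fun a => (p • a.1, p • a.2 + boxExponent α)) ?_ ?_ ?_ ?_
  · rintro ⟨a, b⟩ - ⟨c, d⟩ - hacbd
    simp only [Prod.mk.injEq, add_left_inj] at hacbd
    exact Prod.ext (nsmul_right_injective hp hacbd.1) (nsmul_right_injective hp hacbd.2)
  · rintro ⟨a, b⟩ hab
    simp only [Finset.mem_coe, Finset.HasAntidiagonal.mem_antidiagonal] at hab ⊢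
    rw [← hab, smul_add, add_assoc]
  · rintro ⟨a, b⟩ hab hnot
    by_cases hdvd : ∀ i, p ∣ a i
    · obtain ⟨c, hcm, rfl, rfl⟩ :=
        exists_nsmul_of_add_eq (Finset.HasAntidiagonal.mem_antidiagonal.mp hab) hdvd
      refine absurd ⟨(c, m - c), ?_, rfl⟩ hnot
      simpa using add_tsub_cancel_of_le hcm
    · obtain ⟨i, hi⟩ := not_forall.mp hdvd
      rw [coeff_expand_of_not_dvd _ _ _ hi, zero_mul]
  · rintro ⟨a, b⟩ -
    rw [coeff_expand_smul, coeff_expandPart]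

lemma exists_expandPart_eq (hp : 0 < p) (g : (σ → Fin p) → MvPowerSeries σ R) :
    ∃ f, ∀ α, expandPart α f = g α := by
  let f : MvPowerSeries σ R := fun m =>
    coeff (Finsupp.equivFunOnFinite.symm fun i => m i / p)
      (g fun i => ⟨m i % p, Nat.mod_lt _ hp⟩)
  refine ⟨f, fun α => ?_⟩
  ext m
  change coeff (Finsupp.equivFunOnFinite.symm fun i => (p * m i + α i) / p)
    (g fun i => ⟨(p * m i + α i) % p, _⟩) = coeff m (g α)
  simp [Nat.mul_add_div hp, Nat.div_eq_of_lt, Nat.mod_eq_of_lt]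

variable {k : Type*} [Field k]

lemma card_mul_hkNumber_le_hkNumber_expand (hp : p ≠ 0) (q : ℕ) (H : MvPowerSeries σ k) :
    p ^ Fintype.card σ * hkNumber q H ≤ hkNumber (p * q) (expand p hp H) := by
  classical
  let J := idealOfVarPows σ k q ⊔ Ideal.span {H}
  let L : MvPowerSeries σ k →ₗ[k] ((σ → Fin p) → MvPowerSeries σ k ⧸ J) :=
    LinearMap.pi fun α => (Ideal.Quotient.mkₐ k J).toLinearMap ∘ₗ expandPart α
  have hL (f : MvPowerSeries σ k) (α : σ → Fin p) :
      L f α = Ideal.Quotient.mk J (expandPart α f) := rfl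
  have hfinrank : Module.finrank k ((σ → Fin p) → MvPowerSeries σ k ⧸ J) =
      p ^ Fintype.card σ * hkNumber q H := by
    simp [Module.finrank_pi_fintype, hkNumber, J]
  rw [← hfinrank]
  refine finrank_le_hkNumber L (fun w => ?_) (fun f => ?_) (fun f hf => ?_)
  · choose g hg using fun α => Ideal.Quotient.mk_surjective (w α)
    obtain ⟨f, hf⟩ := exists_expandPart_eq (Nat.pos_of_ne_zero hp) g
    exact ⟨f, funext fun α => by rw [hL, hf, hg]⟩
  · ext α
    rw [hL, expandPart_expand_mul, Pi.zero_apply, Ideal.Quotient.eq_zero_iff_mem]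
    exact Ideal.mul_mem_right _ _ (Ideal.mem_sup_right (Ideal.mem_span_singleton_self H))
  · ext α
    rw [hL, Pi.zero_apply, Ideal.Quotient.eq_zero_iff_mem]
    refine Ideal.mem_sup_left (mem_idealOfVarPows.mpr fun m hm => ?_)
    refine mem_idealOfVarPows.mp hf _ fun i => ?_
    calc p * m i + α i < p * (m i + 1) := by linarith [(α i).isLt]
      _ ≤ p * q := Nat.mul_le_mul_left p (hm i)

/-- Flatness of Frobenius computes the colength of `F ^ p` at level `p * q`; the filtration of
`A / (F ^ p)` by powers of `F` bounds it by `p` copies of the colength of `F`. -/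
lemma pow_card_mul_hkNumber_le (p : ℕ) [Fact p.Prime] [CharP k p] (q : ℕ)
    (F : MvPowerSeries σ k) :
    p ^ Fintype.card σ * hkNumber q F ≤ p * hkNumber (p * q) F := by
  have hp : p ≠ 0 := (Fact.out : p.Prime).ne_zero
  calc p ^ Fintype.card σ * hkNumber q F
      ≤ p ^ Fintype.card σ * hkNumber q (map (frobenius k p) F) :=
        Nat.mul_le_mul_left _ (hkNumber_le_hkNumber_map _ q F)
    _ ≤ hkNumber (p * q) (expand p hp (map (frobenius k p) F)) :=
        card_mul_hkNumber_le_hkNumber_expand hp q _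
    _ = hkNumber (p * q) (F ^ p) := by rw [← map_expand, map_frobenius_expand]
    _ ≤ p * hkNumber (p * q) F := hkNumber_pow_le _ _ _

end Expand

section Asymptotics

variable {σ k : Type*} [Fintype σ] [Field k]

lemma truncMul_boxSeries_eq_zero_iff [LinearOrder σ] {F : MvPowerSeries σ k} {a : σ →₀ ℕ}
    (ha : toLex a = lexOrder F) {r s : ℕ} (has : ∀ i, a i ≤ s) {g : (σ → Fin r) → k} :
    truncMul (r + s) F (Ideal.Quotient.mk _ (boxSeries σ k r g)) = 0 ↔ g = 0 := by
  refine ⟨fun hzero => ?_, fun hg => by simp [hg]⟩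
  by_contra hg
  have hne : boxSeries σ k r g ≠ 0 := fun h => hg (by rw [← boxCoeff_boxSeries g, h, map_zero])
  obtain ⟨b, hb⟩ := exists_finsupp_eq_lexOrder_of_ne_zero hne
  have hb_ne := coeff_ne_zero_of_lexOrder hb.symm
  rw [truncMul_mk, Ideal.Quotient.eq_zero_iff_mem, mem_idealOfVarPows] at hzero
  have hcoeff := hzero (a + b) fun i => by
    have := lt_of_coeff_boxSeries_ne_zero hb_ne i
    have := has i
    rw [Finsupp.add_apply]
    lia
  rw [coeff_mul_of_add_lexOrder ha.symm hb] at hcoeff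
  exact mul_ne_zero (coeff_ne_zero_of_lexOrder ha) hb_ne hcoeff

lemma exists_pow_card_le_finrank_range_truncMul {F : MvPowerSeries σ k} (hF : F ≠ 0) :
    ∃ s : ℕ, ∀ r : ℕ,
      r ^ Fintype.card σ ≤ Module.finrank k (LinearMap.range (truncMul (r + s) F)) := by
  classical
  let _ : LinearOrder σ := LinearOrder.lift' (Fintype.equivFin σ) (Fintype.equivFin σ).injective
  obtain ⟨a, ha⟩ := exists_finsupp_eq_lexOrder_of_ne_zero hF
  refine ⟨∑ i, a i, fun r => ?_⟩
  have has (i : σ) : a i ≤ ∑ i, a i :=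
    Finset.single_le_sum (fun _ _ => Nat.zero_le _) (Finset.mem_univ i)
  let L := (truncMul (r + ∑ i, a i) F).rangeRestrict ∘ₗ
    (Ideal.Quotient.mkₐ k (idealOfVarPows σ k (r + ∑ i, a i))).toLinearMap ∘ₗ boxSeries σ k r
  have hL : Function.Injective L := by
    refine (injective_iff_map_eq_zero L).mpr fun g hg => ?_
    exact (truncMul_boxSeries_eq_zero_iff ha.symm has).mp (congrArg Subtype.val hg)
  simpa using LinearMap.finrank_le_finrank_of_injective hL

lemma add_pow_le_pow_add (r s n : ℕ) :
    (r + s) ^ n ≤ r ^ n + n * s * (r + s) ^ (n - 1) := by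
  have h := abs_pow_sub_pow_le ((r + s : ℕ) : ℤ) (r : ℤ) n
  rw [Nat.abs_cast, Nat.abs_cast, max_eq_left (by simp)] at h
  have hdiff := (le_abs_self _).trans h
  push_cast at hdiff
  rw [add_sub_cancel_left, Nat.abs_cast] at hdiff
  zify
  linarith

lemma exists_hkNumber_le {F : MvPowerSeries σ k} (hF : F ≠ 0) :
    ∃ C : ℕ, ∀ q : ℕ, hkNumber q F ≤ C * q ^ (Fintype.card σ - 1) := by
  obtain ⟨s, hs⟩ := exists_pow_card_le_finrank_range_truncMul hF
  refine ⟨(Fintype.card σ + 1) * s, fun q => ?_⟩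
  have hrank := hkNumber_add_finrank_range q F
  rcases le_or_gt s q with hsq | hqs
  · obtain ⟨r, rfl⟩ := Nat.exists_eq_add_of_le' hsq
    have := add_pow_le_pow_add r s (Fintype.card σ)
    have := hs r
    nlinarith [Nat.zero_le (s * (r + s) ^ (Fintype.card σ - 1))]
  · calc hkNumber q F ≤ q ^ Fintype.card σ := by lia
      _ ≤ s * q ^ (Fintype.card σ - 1) := by
        rcases Fintype.card σ with _ | n
        · simpa using Nat.one_le_of_lt hqs
        · rw [pow_succ', Nat.add_sub_cancel]
          gcongr
      _ ≤ (Fintype.card σ + 1) * s * q ^ (Fintype.card σ - 1) := by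
        gcongr
        exact Nat.le_mul_of_pos_left s (Nat.succ_pos _)

variable (p : ℕ) [Fact p.Prime] {d : ℕ}

lemma monotone_hkNumber_div [CharP k p] (hσ : Fintype.card σ = d + 1)
    (F : MvPowerSeries σ k) :
    Monotone fun e : ℕ => (hkNumber (p ^ e) F : ℝ) / (p : ℝ) ^ (d * e) := by
  have hp : 0 < p := (Fact.out : p.Prime).pos
  refine monotone_nat_of_le_succ fun e => ?_
  have hstep : p ^ d * hkNumber (p ^ e) F ≤ hkNumber (p ^ (e + 1)) F := by
    have := pow_card_mul_hkNumber_le p (p ^ e) F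
    rw [hσ, pow_succ', mul_assoc, ← pow_succ'] at this
    exact Nat.le_of_mul_le_mul_left this hp
  rw [div_le_div_iff₀ (by positivity) (by positivity)]
  calc (hkNumber (p ^ e) F : ℝ) * p ^ (d * (e + 1))
      = (p ^ d * hkNumber (p ^ e) F : ℕ) * (p : ℝ) ^ (d * e) := by push_cast; ring
    _ ≤ hkNumber (p ^ (e + 1)) F * (p : ℝ) ^ (d * e) := by gcongr

lemma bddAbove_hkNumber_div (hσ : Fintype.card σ = d + 1)
    {F : MvPowerSeries σ k} (hF : F ≠ 0) :
    BddAbove (Set.range fun e : ℕ => (hkNumber (p ^ e) F : ℝ) / (p : ℝ) ^ (d * e)) := by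
  have hp : 0 < p := (Fact.out : p.Prime).pos
  obtain ⟨C, hC⟩ := exists_hkNumber_le hF
  refine ⟨C, ?_⟩
  rintro _ ⟨e, rfl⟩
  have hCe := hC (p ^ e)
  rw [hσ, Nat.add_sub_cancel, ← pow_mul, mul_comm e d] at hCe
  rw [div_le_iff₀ (by positivity)]
  exact_mod_cast hCe

lemma hkNumber_div_le_liminf [CharP k p] (hσ : Fintype.card σ = d + 1)
    {F : MvPowerSeries σ k} (hF : F ≠ 0) (e : ℕ) :
    (hkNumber (p ^ e) F : ℝ) / (p : ℝ) ^ (d * e) ≤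
      Filter.liminf (fun e : ℕ => (hkNumber (p ^ e) F : ℝ) / (p : ℝ) ^ (d * e)) Filter.atTop := by
  have hmono := monotone_hkNumber_div p hσ F
  have hbdd := bddAbove_hkNumber_div p hσ hF
  rw [(tendsto_atTop_ciSup hmono hbdd).liminf_eq]
  exact le_ciSup hbdd e

end Asymptotics

/-! ### Hilbert–Kunz numbers of sums of squares -/

section Slices

variable {R : Type*} [CommRing R] {n q : ℕ}

/-- The coefficient of `x_0 ^ j` of a power series in `x_0, …, x_n`, as a power series in the
remaining variables. -/
noncomputable def slice (j : ℕ) : MvPowerSeries (Fin (n + 1)) R →ₗ[R] MvPowerSeries (Fin n) R :=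
  LinearMap.pi fun m => coeff (Finsupp.cons j m)

lemma coeff_slice (j : ℕ) (f : MvPowerSeries (Fin (n + 1)) R) (m : Fin n →₀ ℕ) :
    coeff m (slice j f) = coeff (Finsupp.cons j m) f := rfl

lemma exists_slice_eq (g : ℕ → MvPowerSeries (Fin n) R) : ∃ f, ∀ j, slice j f = g j := by
  let f : MvPowerSeries (Fin (n + 1)) R := fun m => coeff m.tail (g (m 0))
  refine ⟨f, fun j => MvPowerSeries.ext fun m => ?_⟩
  change coeff (Finsupp.cons j m).tail (g (Finsupp.cons j m 0)) = coeff m (g j)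
  rw [Finsupp.tail_cons, Finsupp.cons_zero]

lemma slice_mem_idealOfVarPows {j : ℕ} (hj : j < q) {f : MvPowerSeries (Fin (n + 1)) R}
    (hf : f ∈ idealOfVarPows (Fin (n + 1)) R q) : slice j f ∈ idealOfVarPows (Fin n) R q := by
  rw [mem_idealOfVarPows] at hf ⊢
  intro m hm
  rw [coeff_slice]
  refine hf _ fun i => ?_
  cases i using Fin.cases with
  | zero => simpa using hj
  | succ i => simpa using hm i

lemma slice_X_succ_mul (j : ℕ) (i : Fin n) (f : MvPowerSeries (Fin (n + 1)) R) :
    slice j (X i.succ * f) = X i * slice j f := by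
  classical
  ext m
  have hsub : Finsupp.cons j m - Finsupp.single i.succ 1 =
      Finsupp.cons j (m - Finsupp.single i 1) := by
    ext l
    cases l using Fin.cases <;> simp [Finsupp.single_apply]
  simp only [coeff_slice, X_def, coeff_monomial_mul, Finsupp.single_le_iff, Finsupp.cons_succ, hsub]

lemma slice_zero_X_zero_mul (f : MvPowerSeries (Fin (n + 1)) R) : slice 0 (X 0 * f) = 0 := by
  classical
  ext m
  simp [coeff_slice, X_def, coeff_monomial_mul, Finsupp.single_le_iff]

lemma slice_succ_X_zero_mul (j : ℕ) (f : MvPowerSeries (Fin (n + 1)) R) :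
    slice (j + 1) (X 0 * f) = slice j f := by
  classical
  ext m
  have hsub : Finsupp.cons (j + 1) m - Finsupp.single 0 1 = Finsupp.cons j m := by
    ext l
    cases l using Fin.cases <;> simp [Fin.succ_ne_zero]
  simp [coeff_slice, X_def, coeff_monomial_mul, Finsupp.single_le_iff, hsub]

variable (R n) in
/-- The diagonal quadric `x_0² + ⋯ + x_{n-1}²`, defining the `A₁` singularity. -/
noncomputable def sumSq : MvPowerSeries (Fin n) R := ∑ i, X i ^ 2

lemma sumSq_mem_idealOfVars : sumSq R n ∈ idealOfVars (Fin n) R :=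
  Ideal.sum_mem _ fun i _ => Ideal.pow_mem_of_mem _ (X_mem_idealOfVars i) 2 two_pos

lemma slice_sum_X_succ_sq_mul (j : ℕ) (f : MvPowerSeries (Fin (n + 1)) R) :
    slice j ((∑ i : Fin n, X i.succ ^ 2) * f) = sumSq R n * slice j f := by
  rw [sumSq, Finset.sum_mul, map_sum, Finset.sum_mul]
  refine Finset.sum_congr rfl fun i _ => ?_
  rw [sq, sq, mul_assoc, slice_X_succ_mul, slice_X_succ_mul, mul_assoc]

lemma sumSq_succ_mul (f : MvPowerSeries (Fin (n + 1)) R) :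
    sumSq R (n + 1) * f = X 0 * (X 0 * f) + (∑ i : Fin n, X i.succ ^ 2) * f := by
  rw [sumSq, Fin.sum_univ_succ, add_mul, sq, mul_assoc]

lemma slice_zero_sumSq_mul (f : MvPowerSeries (Fin (n + 1)) R) :
    slice 0 (sumSq R (n + 1) * f) = sumSq R n * slice 0 f := by
  rw [sumSq_succ_mul, map_add, slice_zero_X_zero_mul, zero_add, slice_sum_X_succ_sq_mul]

lemma slice_one_sumSq_mul (f : MvPowerSeries (Fin (n + 1)) R) :
    slice 1 (sumSq R (n + 1) * f) = sumSq R n * slice 1 f := by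
  rw [sumSq_succ_mul, map_add, slice_succ_X_zero_mul, slice_zero_X_zero_mul, zero_add,
    slice_sum_X_succ_sq_mul]

lemma slice_two_sumSq_mul (f : MvPowerSeries (Fin (n + 1)) R) :
    slice 2 (sumSq R (n + 1) * f) = slice 0 f + sumSq R n * slice 2 f := by
  rw [sumSq_succ_mul, map_add, slice_succ_X_zero_mul, slice_succ_X_zero_mul,
    slice_sum_X_succ_sq_mul]

end Slices

section SumSq

variable {k : Type*} [Field k] {n : ℕ}

lemma one_le_hkNumber {σ : Type*} [Finite σ] {q : ℕ} (hq : 0 < q) {F : MvPowerSeries σ k}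
    (hF : F ∈ idealOfVars σ k) : 1 ≤ hkNumber q F := by
  rw [mem_idealOfVars] at hF
  rw [← Module.finrank_self k]
  refine finrank_le_hkNumber (coeff 0) (fun c => ⟨C c, by simp⟩) (fun f => by simp [hF])
    fun f hf => mem_idealOfVarPows.mp hf 0 fun _ => by simpa using hq

lemma mul_hkNumber_sumSq_le (q : ℕ) :
    q * hkNumber q (sumSq k n) ≤
      hkNumber q (∑ i : Fin n, (X i.succ : MvPowerSeries (Fin (n + 1)) k) ^ 2) := by
  let J := idealOfVarPows (Fin n) k q ⊔ Ideal.span {sumSq k n}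
  let L : MvPowerSeries (Fin (n + 1)) k →ₗ[k] Fin q → MvPowerSeries (Fin n) k ⧸ J :=
    LinearMap.pi fun j => (Ideal.Quotient.mkₐ k J).toLinearMap ∘ₗ slice j
  have hL (f) (j : Fin q) : L f j = Ideal.Quotient.mk J (slice j f) := rfl
  have hrank : Module.finrank k (Fin q → MvPowerSeries (Fin n) k ⧸ J) =
      q * hkNumber q (sumSq k n) := by
    rw [Module.finrank_pi_fintype, Finset.sum_const, Finset.card_univ, Fintype.card_fin,
      smul_eq_mul, hkNumber]
  rw [← hrank]
  refine finrank_le_hkNumber L (fun w => ?_) (fun f => ?_) fun f hf => ?_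
  · choose g hg using fun j => Ideal.Quotient.mk_surjective (w j)
    obtain ⟨f, hf⟩ := exists_slice_eq fun j => if hj : j < q then g ⟨j, hj⟩ else 0
    refine ⟨f, funext fun j => ?_⟩
    rw [hL, hf, dif_pos j.isLt, hg]
  · ext j
    rw [hL, slice_sum_X_succ_sq_mul, Pi.zero_apply, Ideal.Quotient.eq_zero_iff_mem]
    exact J.mul_mem_right _ (Ideal.mem_sup_right (Ideal.mem_span_singleton_self _))
  · ext j
    rw [hL, Pi.zero_apply, Ideal.Quotient.eq_zero_iff_mem]
    exact Ideal.mem_sup_left (slice_mem_idealOfVarPows j.isLt hf)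

/- Writing `Q` for the sum of squares in one variable fewer and `f = f₀ + f₁ x₀ + f₂ x₀² + ⋯`, the
map is `f ↦ (f₁ mod Q, f₀ - Q f₂ mod Q²)`. -/
lemma hkNumber_sumSq_add_le (n : ℕ) :
    hkNumber 3 (sumSq k n) + hkNumber 3 (sumSq k n ^ 2) ≤ hkNumber 3 (sumSq k (n + 1)) := by
  let Q := sumSq k n
  let J (G : MvPowerSeries (Fin n) k) := idealOfVarPows (Fin n) k 3 ⊔ Ideal.span {G}
  have hJ (G g) : G * g ∈ J G :=
    (J G).mul_mem_right _ (Ideal.mem_sup_right (Ideal.mem_span_singleton_self _))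
  let L : MvPowerSeries (Fin (n + 1)) k →ₗ[k]
      (MvPowerSeries (Fin n) k ⧸ J Q) × (MvPowerSeries (Fin n) k ⧸ J (Q ^ 2)) :=
    ((Ideal.Quotient.mkₐ k (J Q)).toLinearMap ∘ₗ slice 1).prod
      ((Ideal.Quotient.mkₐ k (J (Q ^ 2))).toLinearMap ∘ₗ
        (slice 0 - LinearMap.mulLeft k Q ∘ₗ slice 2))
  have hL (f) : L f = (Ideal.Quotient.mk (J Q) (slice 1 f),
      Ideal.Quotient.mk (J (Q ^ 2)) (slice 0 f - sumSq k n * slice 2 f)) := rfl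
  have hrank : Module.finrank k ((_ ⧸ J Q) × (_ ⧸ J (Q ^ 2))) =
      hkNumber 3 Q + hkNumber 3 (Q ^ 2) := Module.finrank_prod
  rw [← hrank]
  refine finrank_le_hkNumber L ?_ (fun f => ?_) fun f hf => ?_
  · rintro ⟨w₁, w₂⟩
    obtain ⟨g₁, rfl⟩ := Ideal.Quotient.mk_surjective w₁
    obtain ⟨g₂, rfl⟩ := Ideal.Quotient.mk_surjective w₂
    obtain ⟨f, hf⟩ := exists_slice_eq fun j => if j = 0 then g₂ else if j = 1 then g₁ else 0
    exact ⟨f, by simp [hL, hf]⟩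
  · rw [hL, slice_zero_sumSq_mul, slice_one_sumSq_mul, slice_two_sumSq_mul, Prod.mk_eq_zero,
      Ideal.Quotient.eq_zero_iff_mem, Ideal.Quotient.eq_zero_iff_mem]
    refine ⟨hJ Q _, ?_⟩
    convert hJ (Q ^ 2) (-slice 2 f) using 1
    ring
  · have hslice (j) (hj : j < 3) := slice_mem_idealOfVarPows hj hf
    rw [hL, Prod.mk_eq_zero, Ideal.Quotient.eq_zero_iff_mem, Ideal.Quotient.eq_zero_iff_mem]
    exact ⟨Ideal.mem_sup_left (hslice 1 (by simp)), Ideal.mem_sup_left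
      (Ideal.sub_mem _ (hslice 0 (by simp)) (Ideal.mul_mem_left _ _ (hslice 2 (by simp))))⟩

variable [CharP k 3]

lemma slice_zero_add_mul_slice_two_sumSq_sq_mul_mem (f : MvPowerSeries (Fin (n + 1)) k) :
    slice 0 (sumSq k (n + 1) ^ 2 * f) + sumSq k n * slice 2 (sumSq k (n + 1) ^ 2 * f) ∈
      idealOfVarPows (Fin n) k 3 := by
  have hthree : (3 : MvPowerSeries (Fin n) k) = 0 := by
    rw [← map_ofNat C 3, CharP.ofNat_eq_zero k 3, map_zero]
  have heq : slice 0 (sumSq k (n + 1) ^ 2 * f) + sumSq k n * slice 2 (sumSq k (n + 1) ^ 2 * f) =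
      sumSq k n ^ 3 * slice 2 f := by
    rw [sq, mul_assoc, slice_zero_sumSq_mul, slice_zero_sumSq_mul, slice_two_sumSq_mul,
      slice_zero_sumSq_mul, slice_two_sumSq_mul]
    linear_combination sumSq k n ^ 2 * slice 0 f * hthree
  rw [heq]
  exact Ideal.mul_mem_right _ _ (pow_mem_idealOfVarPows 3 1 sumSq_mem_idealOfVars)

/- With the notation of `hkNumber_sumSq_add_le` the map is
`f ↦ (f₁ mod Q², f₀ + Q f₂, f₂ mod Q)`. -/
lemma hkNumber_sumSq_sq_add_le (n : ℕ) :
    hkNumber 3 (sumSq k n ^ 2) + (3 ^ n + hkNumber 3 (sumSq k n)) ≤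
      hkNumber 3 (sumSq k (n + 1) ^ 2) := by
  let Q := sumSq k n
  let I := idealOfVarPows (Fin n) k 3
  let J (G : MvPowerSeries (Fin n) k) := I ⊔ Ideal.span {G}
  have hJ (G g) : G * g ∈ J G :=
    (J G).mul_mem_right _ (Ideal.mem_sup_right (Ideal.mem_span_singleton_self _))
  let W := (MvPowerSeries (Fin n) k ⧸ J (Q ^ 2)) ×
    (MvPowerSeries (Fin n) k ⧸ I) × (MvPowerSeries (Fin n) k ⧸ J Q)
  let L : MvPowerSeries (Fin (n + 1)) k →ₗ[k] W :=
    ((Ideal.Quotient.mkₐ k (J (Q ^ 2))).toLinearMap ∘ₗ slice 1).prod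
      (((Ideal.Quotient.mkₐ k I).toLinearMap ∘ₗ
        (slice 0 + LinearMap.mulLeft k Q ∘ₗ slice 2)).prod
        ((Ideal.Quotient.mkₐ k (J Q)).toLinearMap ∘ₗ slice 2))
  have hL (f) : L f = (Ideal.Quotient.mk (J (Q ^ 2)) (slice 1 f),
      Ideal.Quotient.mk I (slice 0 f + sumSq k n * slice 2 f),
      Ideal.Quotient.mk (J Q) (slice 2 f)) := rfl
  have hL_zero (f) : L f = 0 ↔
      slice 1 f ∈ J (Q ^ 2) ∧ slice 0 f + sumSq k n * slice 2 f ∈ I ∧ slice 2 f ∈ J Q := by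
    simp only [hL, W, Prod.mk_eq_zero, Ideal.Quotient.eq_zero_iff_mem]
  have hrank : Module.finrank k W =
      hkNumber 3 (Q ^ 2) + (3 ^ n + hkNumber 3 Q) := by
    rw [Module.finrank_prod, Module.finrank_prod, finrank_quotient_idealOfVarPows,
      Fintype.card_fin]
    rfl
  rw [← hrank]
  refine finrank_le_hkNumber L ?_ (fun f => (hL_zero _).mpr ⟨?_, ?_, ?_⟩) fun f hf => ?_
  · rintro ⟨w₁, w₂, w₃⟩
    obtain ⟨g₁, rfl⟩ := Ideal.Quotient.mk_surjective w₁
    obtain ⟨g₂, rfl⟩ := Ideal.Quotient.mk_surjective w₂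
    obtain ⟨g₃, rfl⟩ := Ideal.Quotient.mk_surjective w₃
    obtain ⟨f, hf⟩ := exists_slice_eq fun j =>
      if j = 0 then g₂ - sumSq k n * g₃ else if j = 1 then g₁ else g₃
    exact ⟨f, by simp [hL, hf]⟩
  · rw [sq (sumSq k (n + 1)), mul_assoc, slice_one_sumSq_mul, slice_one_sumSq_mul, ← mul_assoc,
      ← sq]
    exact hJ (Q ^ 2) _
  · exact slice_zero_add_mul_slice_two_sumSq_sq_mul_mem f
  · rw [sq, mul_assoc, slice_two_sumSq_mul, slice_zero_sumSq_mul, ← mul_add]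
    exact hJ Q _
  · have hslice (j) (hj : j < 3) := slice_mem_idealOfVarPows hj hf
    exact (hL_zero f).mpr ⟨Ideal.mem_sup_left (hslice 1 (by simp)),
      Ideal.add_mem _ (hslice 0 (by simp)) (Ideal.mul_mem_left _ _ (hslice 2 (by simp))),
      Ideal.mem_sup_left (hslice 2 (by simp))⟩

lemma le_hkNumber_sumSq (n : ℕ) :
    3 ^ n + 2 ^ n ≤ hkNumber 3 (sumSq k (n + 1)) ∧
      2 * 3 ^ n + 2 ^ n ≤ hkNumber 3 (sumSq k (n + 1) ^ 2) := by
  induction n with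
  | zero =>
    have hpos := one_le_hkNumber three_pos (sumSq_mem_idealOfVars (R := k) (n := 0))
    have hpos_sq := one_le_hkNumber three_pos
      (Ideal.pow_mem_of_mem _ (sumSq_mem_idealOfVars (R := k) (n := 0)) 2 two_pos)
    have hstep := hkNumber_sumSq_add_le (k := k) 0
    have hstep_sq := hkNumber_sumSq_sq_add_le (k := k) 0
    lia
  | succ n ih =>
    have hstep := hkNumber_sumSq_add_le (k := k) (n + 1)
    have hstep_sq := hkNumber_sumSq_sq_add_le (k := k) (n + 1)
    lia

end SumSq

/-! ### Semicontinuity -/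

section Semicontinuity

variable {k : Type*} [Field k]

lemma eventually_isUnit_one_add_smul {V : Type*} [AddCommGroup V] [Module k V] [Module.Finite k V]
    (E : Module.End k V) : ∀ᶠ t : k in Filter.cofinite, IsUnit (1 + t • E) := by
  have hfin : {t : k | -t⁻¹ ∈ spectrum k E}.Finite :=
    (Module.End.finite_spectrum E).preimage fun s _ t _ h => inv_injective (neg_injective h)
  filter_upwards [hfin.compl_mem_cofinite, (Set.finite_singleton (0 : k)).compl_mem_cofinite]
    with t ht ht0
  have ht0 : t ≠ 0 := ht0
  have hunit : IsUnit (-(algebraMap k (Module.End k V) (-t⁻¹) - E)) :=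
    (spectrum.notMem_iff.mp ht).neg
  have hsmul : 1 + t • E = t • -(algebraMap k (Module.End k V) (-t⁻¹) - E) := by
    rw [Algebra.algebraMap_eq_smul_one, neg_sub, smul_sub, smul_smul, mul_neg, mul_inv_cancel₀ ht0,
      neg_one_smul, sub_neg_eq_add, add_comm]
  rw [hsmul]
  exact hunit.smul (Units.mk0 t ht0)

lemma eventually_finrank_range_le {V W : Type*} [AddCommGroup V] [Module k V] [AddCommGroup W]
    [Module k W] [Module.Finite k W] (S T : V →ₗ[k] W) :
    ∀ᶠ t : k in Filter.cofinite, Module.finrank k (LinearMap.range S) ≤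
      Module.finrank k (LinearMap.range (S + t • T)) := by
  obtain ⟨π, hπ⟩ := LinearMap.exists_leftInverse_of_injective (LinearMap.range S).subtype
    (Submodule.ker_subtype _)
  obtain ⟨ι, hι⟩ :=
    LinearMap.exists_rightInverse_of_surjective S.rangeRestrict S.range_rangeRestrict
  have hπS (v : V) : π (S v) = S.rangeRestrict v := LinearMap.congr_fun hπ (S.rangeRestrict v)
  have hcomp (t : k) : π ∘ₗ (S + t • T) ∘ₗ ι = 1 + t • (π ∘ₗ T ∘ₗ ι) := by
    ext1 x
    have hx : S.rangeRestrict (ι x) = x := LinearMap.congr_fun hι x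
    simp [hπS, hx]
  filter_upwards [eventually_isUnit_one_add_smul (π ∘ₗ T ∘ₗ ι)] with t ht
  rw [← hcomp] at ht
  have hsurj : Function.Surjective (π ∘ₗ (LinearMap.range (S + t • T)).subtype) := fun x => by
    obtain ⟨y, rfl⟩ := ((Module.End.isUnit_iff _).mp ht).2 x
    exact ⟨⟨(S + t • T) (ι y), ⟨_, rfl⟩⟩, rfl⟩
  exact LinearMap.finrank_le_finrank_of_surjective hsurj

lemma eventually_hkNumber_add_smul_le {σ : Type*} [Finite σ] (q : ℕ) (F G : MvPowerSeries σ k) :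
    ∀ᶠ t : k in Filter.cofinite, hkNumber q (F + t • G) ≤ hkNumber q F := by
  cases nonempty_fintype σ
  filter_upwards [eventually_finrank_range_le (truncMul q F) (truncMul q G)] with t ht
  have hadd : truncMul q (F + t • G) = truncMul q F + t • truncMul q G := by
    refine LinearMap.ext fun x => ?_
    obtain ⟨f, rfl⟩ := Ideal.Quotient.mk_surjective x
    rw [LinearMap.add_apply, LinearMap.smul_apply, truncMul_mk, truncMul_mk, truncMul_mk, add_mul,
      smul_mul_assoc, map_add]
    rfl
  rw [← hadd] at ht
  have hF := hkNumber_add_finrank_range q F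
  have hG := hkNumber_add_finrank_range q (F + t • G)
  lia

end Semicontinuity

/-! ### Symmetric matrices over local rings -/

section Gram

open Matrix

variable {R m n : Type*} [CommRing R] [Fintype m] [Fintype n]

/-- `a = Pᵀ * P` for some square matrix `P`: the quadratic form `x ⬝ᵥ a *ᵥ x` is a sum of squares of
the linear forms given by the rows of `P`. -/
def IsGram (a : Matrix n n R) : Prop :=
  ∃ P : Matrix n n R, Pᵀ * P = a

lemma IsGram.of_submatrix {a : Matrix n n R} (e : m ≃ n) (ha : IsGram (a.submatrix e e)) :
    IsGram a := by
  obtain ⟨P, hP⟩ := ha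
  refine ⟨P.submatrix e.symm e.symm, ?_⟩
  rw [transpose_submatrix, submatrix_mul_equiv, hP]
  simp

lemma col_transpose_mul_mul (L a : Matrix n n R) (j : n) :
    (Lᵀ * a * L).col j = Lᵀ *ᵥ (a *ᵥ L.col j) := by
  rw [mulVec_mulVec]
  rfl

variable [DecidableEq m]

lemma isGram_fromBlocks {S : Matrix m m R} (hS : IsUnit S.det) {B : Matrix m n R}
    {D : Matrix n n R} (hD : IsGram (D - Bᵀ * (Sᵀ * S)⁻¹ * B)) :
    IsGram (fromBlocks (Sᵀ * S) B Bᵀ D) := by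
  obtain ⟨P, hP⟩ := hD
  have hSt : IsUnit Sᵀ.det := by rwa [det_transpose]
  refine ⟨fromBlocks S (Sᵀ⁻¹ * B) 0 P, ?_⟩
  rw [fromBlocks_transpose, fromBlocks_multiply, transpose_zero, Matrix.zero_mul, Matrix.zero_mul,
    Matrix.mul_zero, add_zero, add_zero, add_zero, hP, ← Matrix.mul_assoc,
    mul_nonsing_inv _ hSt, Matrix.one_mul, transpose_mul, transpose_nonsing_inv,
    transpose_transpose, Matrix.mul_assoc Bᵀ, nonsing_inv_mul _ hS, Matrix.mul_one,
    Matrix.mul_inv_rev]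
  simp only [Matrix.mul_assoc, add_sub_cancel]

variable [DecidableEq n]

lemma IsGram.exists_isUnit_det {a : Matrix n n R} (ha : IsGram a) (hdet : IsUnit a.det) :
    ∃ P : Matrix n n R, IsUnit P.det ∧ Pᵀ * P = a := by
  obtain ⟨P, rfl⟩ := ha
  rw [det_mul] at hdet
  exact ⟨P, isUnit_of_mul_isUnit_right hdet, rfl⟩

lemma IsGram.of_congruent {a L : Matrix n n R} (hL : IsUnit L.det) (ha : IsGram (Lᵀ * a * L)) :
    IsGram a := by
  obtain ⟨P, hP⟩ := ha
  have hinv := mul_nonsing_inv L hL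
  refine ⟨P * L⁻¹, ?_⟩
  calc (P * L⁻¹)ᵀ * (P * L⁻¹) = (L * L⁻¹)ᵀ * a * (L * L⁻¹) := by
        rw [transpose_mul, Matrix.mul_assoc, ← Matrix.mul_assoc Pᵀ, hP]
        simp only [transpose_mul, Matrix.mul_assoc]
    _ = a := by rw [hinv, transpose_one, Matrix.one_mul, Matrix.mul_one]

lemma exists_isUnit_det_col_eq {v : n → R} {i : n} (hv : IsUnit (v i)) (j : n) :
    ∃ L : Matrix n n R, IsUnit L.det ∧ L.col j = v := by
  refine ⟨(updateCol 1 i v).submatrix id (Equiv.swap j i), ?_, ?_⟩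
  · have hdet : (updateCol (1 : Matrix n n R) i v).det = v i := by
      rw [← cramer_apply, cramer_one, Module.End.one_apply]
    rw [det_permute', hdet]
    exact ((Equiv.Perm.sign _).isUnit.map (Int.castRingHom R)).mul hv
  · ext l
    simp

lemma dotProduct_single_mulVec_single (a : Matrix n n R) (i j : n) :
    Pi.single i 1 ⬝ᵥ a *ᵥ Pi.single j 1 = a i j := by
  rw [single_one_dotProduct, mulVec_single_one, col_apply]

lemma isGram_fin_succ {N : ℕ} {a : Matrix (Fin (N + 1)) (Fin (N + 1)) R} (ha : a.IsSymm)
    (hdet : IsUnit a.det) {s : R} (hs : s * s = a 0 0) (hunit : IsUnit s)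
    (ih : ∀ b : Matrix (Fin N) (Fin N) R, b.IsSymm → IsUnit b.det → IsGram b) : IsGram a := by
  let e : Unit ⊕ Fin N ≃ Fin (N + 1) :=
    (Equiv.sumComm _ _).trans ((finSuccEquiv N).trans (Equiv.optionEquivSumPUnit _)).symm
  refine IsGram.of_submatrix e ?_
  let S : Matrix Unit Unit R := scalar Unit s
  have hS : IsUnit S.det := by simpa [S] using hunit
  let B := (a.submatrix e e).toBlocks₁₂
  let D := (a.submatrix e e).toBlocks₂₂
  have hblocks : a.submatrix e e = fromBlocks (Sᵀ * S) B Bᵀ D := by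
    rw [← fromBlocks_toBlocks (a.submatrix e e)]
    congr 1
    · ext
      simp [S, toBlocks₁₁, e, hs]
    · ext i j
      exact ha.apply _ _
  have hSS : IsUnit (Sᵀ * S).det := by
    rw [det_mul, det_transpose]
    exact hS.mul hS
  have hdet_schur : IsUnit (D - Bᵀ * (Sᵀ * S)⁻¹ * B).det := by
    rw [← det_submatrix_equiv_self e, hblocks] at hdet
    let := invertibleOfIsUnitDet _ hSS
    rw [det_fromBlocks₁₁, invOf_eq_nonsing_inv] at hdet
    exact isUnit_of_mul_isUnit_right hdet
  have hD : D.IsSymm := IsSymm.ext fun i j => ha.apply _ _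
  have hsymm : (D - Bᵀ * (Sᵀ * S)⁻¹ * B).IsSymm := by
    rw [IsSymm, transpose_sub, hD.eq]
    simp only [transpose_mul, transpose_nonsing_inv, transpose_transpose, Matrix.mul_assoc]
  rw [hblocks]
  exact isGram_fromBlocks hS (ih _ hsymm hdet_schur)

variable [IsLocalRing R]

lemma exists_isUnit_apply_of_isUnit_det [Nonempty n] {a : Matrix n n R} (hdet : IsUnit a.det) :
    ∃ i j, IsUnit (a i j) := by
  by_contra! hnonunit
  refine hdet.map (IsLocalRing.residue R) |>.ne_zero ?_
  have hzero : (IsLocalRing.residue R).mapMatrix a = 0 := by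
    ext i j
    exact (IsLocalRing.residue_eq_zero_iff _).mpr (hnonunit i j)
  rw [RingHom.map_det, hzero, det_zero]

/- If no diagonal entry is a unit but `a i j` is, the form takes the unit value
`a i i + a j j + 2 * a i j` at `e i + e j`. -/
lemma exists_isUnit_dotProduct_mulVec_self (htwo : IsUnit (2 : R)) [Nonempty n] {a : Matrix n n R}
    (ha : a.IsSymm) (hdet : IsUnit a.det) :
    ∃ v : n → R, (∃ i, IsUnit (v i)) ∧ IsUnit (v ⬝ᵥ a *ᵥ v) := by
  by_cases hdiag : ∃ i, IsUnit (a i i)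
  · obtain ⟨i, hi⟩ := hdiag
    exact ⟨Pi.single i 1, ⟨i, by simp⟩, by rwa [dotProduct_single_mulVec_single]⟩
  push Not at hdiag
  obtain ⟨i, j, hij⟩ := exists_isUnit_apply_of_isUnit_det hdet
  have hne : i ≠ j := by
    rintro rfl
    exact hdiag i hij
  refine ⟨Pi.single i 1 + Pi.single j 1, ⟨i, by simp [hne]⟩, ?_⟩
  have hvalue : (Pi.single i 1 + Pi.single j 1) ⬝ᵥ a *ᵥ (Pi.single i 1 + Pi.single j 1) =
      (a i i + a j j) + 2 * a i j := by
    simp only [mulVec_add, dotProduct_add, add_dotProduct, dotProduct_single_mulVec_single,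
      ha.apply i j]
    ring
  have hdiag_sum : a i i + a j j ∈ IsLocalRing.maximalIdeal R :=
    Ideal.add_mem _ (hdiag i) (hdiag j)
  by_contra hnonunit
  rw [hvalue] at hnonunit
  exact (Ideal.add_mem_iff_right _ hdiag_sum).mp hnonunit (htwo.mul hij)

lemma isGram_of_isUnit_det (htwo : IsUnit (2 : R)) (hsq : ∀ r : R, IsUnit r → IsSquare r) {N : ℕ}
    {a : Matrix (Fin N) (Fin N) R} (ha : a.IsSymm) (hdet : IsUnit a.det) : IsGram a := by
  induction N with
  | zero => exact ⟨1, Subsingleton.elim _ _⟩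
  | succ N ih =>
    obtain ⟨v, ⟨i, hvi⟩, hv⟩ := exists_isUnit_dotProduct_mulVec_self htwo ha hdet
    obtain ⟨L, hL, hLv⟩ := exists_isUnit_det_col_eq hvi 0
    refine IsGram.of_congruent hL ?_
    have hcorner : (Lᵀ * a * L) 0 0 = v ⬝ᵥ a *ᵥ v := by
      change (Lᵀ * a * L).col 0 0 = _
      rw [col_transpose_mul_mul, ← hLv]
      rfl
    obtain ⟨s, hs⟩ := hsq _ hv
    refine isGram_fin_succ ?_ ?_ (hs.symm.trans hcorner.symm)
      (isUnit_of_mul_isUnit_left (hs ▸ hv)) fun b => ih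
    · simp only [IsSymm, transpose_mul, transpose_transpose, ha.eq, Matrix.mul_assoc]
    · rw [det_mul, det_mul, det_transpose]
      exact (hL.mul hdet).mul hL

lemma exists_col_zero_mem_maximalIdeal {a : Matrix n n R} (hdet : ¬IsUnit a.det) (j : n) :
    ∃ L : Matrix n n R, IsUnit L.det ∧ ∀ i, (Lᵀ * a * L) i j ∈ IsLocalRing.maximalIdeal R := by
  have hdet_residue : ((IsLocalRing.residue R).mapMatrix a).det = 0 := by
    rw [← RingHom.map_det]
    exact (IsLocalRing.residue_eq_zero_iff _).mpr hdet
  obtain ⟨v, hv, hav⟩ := exists_mulVec_eq_zero_iff.mpr hdet_residue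
  obtain ⟨i, hi⟩ := Function.ne_iff.mp hv
  choose w hw using fun l => IsLocalRing.residue_surjective (v l)
  obtain rfl : IsLocalRing.residue R ∘ w = v := funext hw
  obtain ⟨L, hL, hLw⟩ := exists_isUnit_det_col_eq
    ((IsLocalRing.residue_ne_zero_iff_isUnit _).mp hi) j
  have haw (l : n) : (a *ᵥ w) l ∈ IsLocalRing.maximalIdeal R := by
    rw [← IsLocalRing.residue_eq_zero_iff, RingHom.map_mulVec]
    exact congrFun hav l
  refine ⟨L, hL, fun l => ?_⟩
  change (Lᵀ * a * L).col j l ∈ _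
  rw [col_transpose_mul_mul, hLw]
  exact Ideal.sum_mem _ fun _ _ => Ideal.mul_mem_left _ _ (haw _)

end Gram

/-! ### Completing the square -/

section CompleteSquare

open Matrix

variable {R n : Type*} [CommRing R] [Fintype n]

lemma mulVec_mem (I : Ideal R) (P : Matrix n n R) {u : n → R} (hu : ∀ i, u i ∈ I) (i : n) :
    (P *ᵥ u) i ∈ I :=
  I.sum_mem fun j _ => I.mul_mem_left _ (hu j)

lemma dotProduct_mem (I : Ideal R) (v : n → R) {u : n → R} (hu : ∀ i, u i ∈ I) : v ⬝ᵥ u ∈ I :=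
  I.sum_mem fun j _ => I.mul_mem_left _ (hu j)

lemma dotProduct_mulVec_mulVec (P a : Matrix n n R) (u : n → R) :
    (P *ᵥ u) ⬝ᵥ a *ᵥ (P *ᵥ u) = u ⬝ᵥ (Pᵀ * a * P) *ᵥ u := by
  rw [Matrix.mul_assoc, ← mulVec_mulVec u Pᵀ, dotProduct_mulVec u Pᵀ, vecMul_transpose,
    mulVec_mulVec]

lemma span_insert_range_mulVec_add_smul_le (P : Matrix n n R) (y₀ : R) (y r : n → R) :
    Ideal.span (insert y₀ (Set.range (P *ᵥ y + y₀ • r))) ≤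
      Ideal.span (insert y₀ (Set.range y)) := by
  have hy₀ : y₀ ∈ Ideal.span (insert y₀ (Set.range y)) :=
    Ideal.subset_span (Set.mem_insert _ _)
  rw [Ideal.span_le, Set.insert_subset_iff, Set.range_subset_iff]
  exact ⟨hy₀, fun i => Ideal.add_mem _
    (mulVec_mem _ P (fun j => Ideal.subset_span (.inr ⟨j, rfl⟩)) i) (Ideal.mul_mem_right _ _ hy₀)⟩

lemma exists_isSymm_dotProduct_mulVec_eq (htwo : IsUnit (2 : R)) {x : n → R} {F : R}
    (hF : F ∈ Ideal.span (Set.range x) ^ 2) :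
    ∃ a : Matrix n n R, a.IsSymm ∧ x ⬝ᵥ a *ᵥ x = F := by
  obtain ⟨half, hhalf⟩ := htwo.exists_right_inv
  rw [sq] at hF
  refine Submodule.mul_induction_on hF (fun f hf g hg => ?_) ?_
  · obtain ⟨c, rfl⟩ := Ideal.mem_span_range_iff_exists_fun.mp hf
    obtain ⟨e, rfl⟩ := Ideal.mem_span_range_iff_exists_fun.mp hg
    refine ⟨half • (vecMulVec c e + vecMulVec e c), IsSymm.smul ?_ half, ?_⟩
    · rw [IsSymm, transpose_add, transpose_vecMulVec, transpose_vecMulVec, add_comm]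
    · change _ = (c ⬝ᵥ x) * (e ⬝ᵥ x)
      simp only [smul_mulVec, add_mulVec, vecMulVec_mulVec, dotProduct_comm x, op_smul_eq_smul,
        smul_dotProduct, add_dotProduct, smul_eq_mul]
      linear_combination (c ⬝ᵥ x) * (e ⬝ᵥ x) * hhalf
  · rintro f g ⟨a, ha, rfl⟩ ⟨b, hb, rfl⟩
    exact ⟨a + b, ha.add hb, by rw [add_mulVec, dotProduct_add]⟩

variable [DecidableEq n]

lemma span_insert_range_mulVec_add_smul {P : Matrix n n R} (hP : IsUnit P.det) (y₀ : R)
    (y r : n → R) :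
    Ideal.span (insert y₀ (Set.range (P *ᵥ y + y₀ • r))) =
      Ideal.span (insert y₀ (Set.range y)) := by
  refine le_antisymm (span_insert_range_mulVec_add_smul_le P y₀ y r) ?_
  have hy : y = P⁻¹ *ᵥ (P *ᵥ y + y₀ • r) + y₀ • -(P⁻¹ *ᵥ r) := by
    rw [mulVec_add, mulVec_mulVec, nonsing_inv_mul _ hP, one_mulVec, mulVec_smul, smul_neg,
      add_neg_cancel_right]
  conv_lhs => rw [hy]
  exact span_insert_range_mulVec_add_smul_le _ _ _ _

lemma span_range_mulVec {P : Matrix n n R} (hP : IsUnit P.det) (u : n → R) :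
    Ideal.span (Set.range (P *ᵥ u)) = Ideal.span (Set.range u) := by
  simpa using span_insert_range_mulVec_add_smul hP 0 u 0

lemma exists_dotProduct_self_sub_mem_span_cube {R n : Type*} [CommRing R] [Fintype n]
    (htwo : IsUnit (2 : R)) {g y₀ : R} {u : n → R}
    (hg : g ∈ Ideal.span (insert y₀ (Set.range u))) :
    ∃ w : n → R,
      Ideal.span (insert y₀ (Set.range w)) = Ideal.span (insert y₀ (Set.range u)) ∧
        u ⬝ᵥ u + g * y₀ ^ 2 - w ⬝ᵥ w ∈ Ideal.span {y₀ ^ 3} := by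
  classical
  obtain ⟨half, hhalf⟩ := htwo.exists_right_inv
  obtain ⟨h₀, _, hgu, rfl⟩ := Ideal.mem_span_insert.mp hg
  obtain ⟨h, rfl⟩ := Ideal.mem_span_range_iff_exists_fun.mp hgu
  refine ⟨u + y₀ • (half * y₀) • h, ?_, ?_⟩
  · simpa using span_insert_range_mulVec_add_smul (P := 1) (by simp) y₀ u ((half * y₀) • h)
  · change u ⬝ᵥ u + (h₀ * y₀ + h ⬝ᵥ u) * y₀ ^ 2 - _ ∈ _
    refine Ideal.mem_span_singleton.mpr ⟨h₀ - half ^ 2 * y₀ * (h ⬝ᵥ h), ?_⟩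
    simp only [add_dotProduct, dotProduct_add, smul_dotProduct, dotProduct_smul, smul_eq_mul,
      dotProduct_comm u h]
    linear_combination -(h ⬝ᵥ u) * y₀ ^ 2 * hhalf

lemma IsGram.exists_complete_square {b : Matrix n n R} (hb : IsGram b) (hdet : IsUnit b.det)
    {I : Ideal R} {c : n → R} (hc : ∀ i, c i ∈ I) {c₀ : R} (hc₀ : c₀ ∈ I) (y₀ : R) (y : n → R) :
    ∃ u : n → R, ∃ g ∈ I,
      Ideal.span (insert y₀ (Set.range u)) = Ideal.span (insert y₀ (Set.range y)) ∧
        y ⬝ᵥ b *ᵥ y + 2 * (c ⬝ᵥ y) * y₀ + c₀ * y₀ ^ 2 = u ⬝ᵥ u + g * y₀ ^ 2 := by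
  obtain ⟨P, hP, rfl⟩ := hb.exists_isUnit_det hdet
  have hPt : IsUnit Pᵀ.det := by rwa [det_transpose]
  let r := Pᵀ⁻¹ *ᵥ c
  have hr (i : n) : r i ∈ I := mulVec_mem I _ hc i
  have hry : c ⬝ᵥ y = r ⬝ᵥ P *ᵥ y := by
    rw [dotProduct_mulVec, ← mulVec_transpose, mulVec_mulVec, mul_nonsing_inv _ hPt, one_mulVec]
  have hyy : y ⬝ᵥ (Pᵀ * P) *ᵥ y = (P *ᵥ y) ⬝ᵥ (P *ᵥ y) := by
    simpa using (dotProduct_mulVec_mulVec P 1 y).symm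
  refine ⟨P *ᵥ y + y₀ • r, c₀ - r ⬝ᵥ r, I.sub_mem hc₀ (dotProduct_mem I r hr),
    span_insert_range_mulVec_add_smul hP y₀ y r, ?_⟩
  rw [hyy, hry]
  simp only [add_dotProduct, dotProduct_add, smul_dotProduct, dotProduct_smul, smul_eq_mul,
    dotProduct_comm (P *ᵥ y) r]
  ring

lemma dotProduct_mulVec_fin_succ {d : ℕ} {a : Matrix (Fin (d + 1)) (Fin (d + 1)) R}
    (ha : a.IsSymm) (y : Fin (d + 1) → R) :
    y ⬝ᵥ a *ᵥ y = Fin.tail y ⬝ᵥ a.submatrix Fin.succ Fin.succ *ᵥ Fin.tail y +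
      2 * (Fin.tail (a.col 0) ⬝ᵥ Fin.tail y) * y 0 + a 0 0 * y 0 ^ 2 := by
  have hrow (i : Fin d) : a 0 i.succ = a i.succ 0 := ha.apply _ _
  simp only [mulVec, dotProduct, Fin.sum_univ_succ, hrow, Fin.tail, col_apply, submatrix_apply,
    mul_add, Finset.sum_add_distrib]
  have hcol : ∑ i : Fin d, y i.succ * (a i.succ 0 * y 0) =
      (∑ i : Fin d, a i.succ 0 * y i.succ) * y 0 := by
    rw [Finset.sum_mul]
    exact Finset.sum_congr rfl fun i _ => by ring
  rw [hcol]
  ring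

lemma eventually_isUnit_det_add_smul_one {k σ : Type*} [Field k]
    (b : Matrix n n (MvPowerSeries σ k)) :
    ∀ᶠ t : k in Filter.cofinite, IsUnit (b + t • 1).det := by
  let b₀ := constantCoeff.mapMatrix b
  have hfin : {t : k | -t ∈ spectrum k b₀}.Finite :=
    (Matrix.finite_spectrum b₀).preimage neg_injective.injOn
  filter_upwards [hfin.compl_mem_cofinite] with t ht
  have hunit : IsUnit (algebraMap k (Matrix n n k) (-t) - b₀) := spectrum.notMem_iff.mp ht
  have hmap : constantCoeff.mapMatrix (b + t • 1) =
      -(algebraMap k (Matrix n n k) (-t) - b₀) := by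
    ext i j
    by_cases hij : i = j
    · simp [b₀, hij, algebraMap_matrix_apply, add_comm]
    · simp [b₀, hij, algebraMap_matrix_apply]
  rw [isUnit_iff_constantCoeff, RingHom.map_det, ← isUnit_iff_isUnit_det, hmap]
  exact hunit.neg

end CompleteSquare

/-! ### Quadratic forms with power series coefficients -/

section QuadraticForms

open Matrix

variable {k : Type*} [Field k]

lemma isUnit_two_of_charP_three (R : Type*) [CommRing R] [CharP R 3] : IsUnit (2 : R) := by
  have hthree : (3 : R) = 0 := CharP.cast_eq_zero R 3
  exact IsUnit.of_mul_eq_one 2 (by linear_combination hthree)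

lemma isUnit_two_mvPowerSeries (σ : Type*) {R : Type*} [CommRing R] (htwo : IsUnit (2 : R)) :
    IsUnit (2 : MvPowerSeries σ R) :=
  map_ofNat (C : R →+* MvPowerSeries σ R) 2 ▸ htwo.map C

lemma infinite_of_forall_isSquare (htwo : (2 : k) ≠ 0) (hsq : ∀ r : k, IsSquare r) :
    Infinite k := by
  by_contra hfin
  have := not_infinite_iff_finite.mp hfin
  obtain ⟨r, hr⟩ := FiniteField.exists_nonsquare (F := k) fun hchar =>
    htwo (by simpa [hchar] using ringChar.Nat.cast_ringChar (R := k))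
  exact hr (hsq r)

lemma isGram_of_forall_isSquare {σ : Type*} [Finite σ] (htwo : IsUnit (2 : k))
    (hsq : ∀ r : k, IsSquare r) {N : ℕ} {a : Matrix (Fin N) (Fin N) (MvPowerSeries σ k)}
    (ha : a.IsSymm) (hdet : IsUnit a.det) : IsGram a := by
  refine isGram_of_isUnit_det (isUnit_two_mvPowerSeries σ htwo) (fun f hf => ?_) ha hdet
  exact isSquare_of_isSquare_constantCoeff htwo (isUnit_iff_constantCoeff.mp hf) (hsq _)

lemma exists_algEquiv_sumSq_eq (htwo : IsUnit (2 : k)) (hsq : ∀ r : k, IsSquare r) {N : ℕ}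
    {a : Matrix (Fin N) (Fin N) (MvPowerSeries (Fin N) k)} (ha : a.IsSymm) (hdet : IsUnit a.det) :
    ∃ φ : MvPowerSeries (Fin N) k ≃ₐ[k] MvPowerSeries (Fin N) k,
      φ (sumSq k N) = X ⬝ᵥ a *ᵥ X := by
  obtain ⟨P, hP, rfl⟩ := (isGram_of_forall_isSquare htwo hsq ha hdet).exists_isUnit_det hdet
  obtain ⟨φ, hφ⟩ := exists_algEquiv_X_eq (span_range_mulVec hP X)
  refine ⟨φ, ?_⟩
  calc φ (sumSq k N) = (P *ᵥ X) ⬝ᵥ (P *ᵥ X) := by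
        simp only [sumSq, map_sum, map_pow, hφ, dotProduct, ← sq]
    _ = X ⬝ᵥ (Pᵀ * P) *ᵥ X := by simpa using dotProduct_mulVec_mulVec P 1 X

lemma hkNumber_dotProduct_self (p : ℕ) [Fact p.Prime] [CharP k p] (e : ℕ) {d : ℕ}
    {y₀ : MvPowerSeries (Fin (d + 1)) k} {w : Fin d → MvPowerSeries (Fin (d + 1)) k}
    (hw : Ideal.span (insert y₀ (Set.range w)) = idealOfVars (Fin (d + 1)) k) :
    hkNumber (p ^ e) (w ⬝ᵥ w) =
      hkNumber (p ^ e) (∑ i : Fin d, (X i.succ : MvPowerSeries (Fin (d + 1)) k) ^ 2) := by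
  rw [← Fin.range_cons] at hw
  obtain ⟨φ, hφ⟩ := exists_algEquiv_X_eq hw
  have hφw : φ (∑ i : Fin d, X i.succ ^ 2) = w ⬝ᵥ w := by
    simp only [map_sum, map_pow, hφ, Fin.cons_succ, dotProduct, ← sq]
  rw [← hφw, hkNumber_algEquiv]

section CharThree

variable [CharP k 3] {d : ℕ}
  {a : Matrix (Fin (d + 1)) (Fin (d + 1)) (MvPowerSeries (Fin (d + 1)) k)}

lemma hkNumber_dotProduct_mulVec_of_isUnit_det_submatrix (hsq : ∀ r : k, IsSquare r)
    {y : Fin (d + 1) → MvPowerSeries (Fin (d + 1)) k}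
    (hy : Ideal.span (Set.range y) = idealOfVars (Fin (d + 1)) k) (ha : a.IsSymm)
    (hcol : ∀ i, a i 0 ∈ idealOfVars (Fin (d + 1)) k)
    (hdet : IsUnit (a.submatrix Fin.succ Fin.succ).det) :
    hkNumber 3 (y ⬝ᵥ a *ᵥ y) =
      hkNumber 3 (∑ i : Fin d, (X i.succ : MvPowerSeries (Fin (d + 1)) k) ^ 2) := by
  have htwo := isUnit_two_of_charP_three k
  rw [← Fin.cons_self_tail y, Fin.range_cons] at hy
  obtain ⟨u, g, hg, hspan_u, hform⟩ :=
    (isGram_of_forall_isSquare htwo hsq (ha.submatrix _) hdet).exists_complete_square hdet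
      (c := Fin.tail (a.col 0)) (fun i => hcol i.succ) (hcol 0) (y 0) (Fin.tail y)
  rw [← hy, ← hspan_u] at hg
  obtain ⟨w, hspan_w, hcube⟩ := exists_dotProduct_self_sub_mem_span_cube
    (isUnit_two_mvPowerSeries _ htwo) hg
  rw [hspan_u, hy] at hspan_w
  have hy₀ : y 0 ^ 3 ∈ idealOfVarPows (Fin (d + 1)) k 3 :=
    pow_mem_idealOfVarPows 3 1 (hy ▸ Ideal.subset_span (Set.mem_insert _ _))
  rw [dotProduct_mulVec_fin_succ ha, hform,
    hkNumber_congr ((Ideal.span_singleton_le_iff_mem _).mpr hy₀ hcube)]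
  exact hkNumber_dotProduct_self 3 1 hspan_w

lemma hkNumber_sum_X_succ_sq_le_of_col_zero_mem (hsq : ∀ r : k, IsSquare r)
    {y : Fin (d + 1) → MvPowerSeries (Fin (d + 1)) k}
    (hy : Ideal.span (Set.range y) = idealOfVars (Fin (d + 1)) k) (ha : a.IsSymm)
    (hcol : ∀ i, a i 0 ∈ idealOfVars (Fin (d + 1)) k) :
    hkNumber 3 (∑ i : Fin d, (X i.succ : MvPowerSeries (Fin (d + 1)) k) ^ 2) ≤
      hkNumber 3 (y ⬝ᵥ a *ᵥ y) := by
  have := infinite_of_forall_isSquare (isUnit_two_of_charP_three k).ne_zero hsq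
  let D : Matrix (Fin (d + 1)) (Fin (d + 1)) (MvPowerSeries (Fin (d + 1)) k) :=
    diagonal (Fin.cons 0 1)
  obtain ⟨t, ht_le, ht_det⟩ := ((eventually_hkNumber_add_smul_le 3 (y ⬝ᵥ a *ᵥ y)
    (y ⬝ᵥ D *ᵥ y)).and
      (eventually_isUnit_det_add_smul_one (a.submatrix Fin.succ Fin.succ))).exists
  have hform : y ⬝ᵥ a *ᵥ y + t • (y ⬝ᵥ D *ᵥ y) = y ⬝ᵥ (a + t • D) *ᵥ y := by
    rw [add_mulVec, dotProduct_add, smul_mulVec, dotProduct_smul]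
  have hsub : (a + t • D).submatrix Fin.succ Fin.succ =
      a.submatrix Fin.succ Fin.succ + t • 1 := by
    ext1 i j
    simp [D, diagonal_apply, one_apply]
  have hcol' (i : Fin (d + 1)) : (a + t • D) i 0 ∈ idealOfVars (Fin (d + 1)) k := by
    refine Fin.cases ?_ (fun j => ?_) i
    · simpa [D] using hcol 0
    · simpa [D] using hcol j.succ
  rw [hform] at ht_le
  rwa [hkNumber_dotProduct_mulVec_of_isUnit_det_submatrix hsq hy
    (ha.add ((isSymm_diagonal _).smul t)) hcol' (hsub ▸ ht_det)] at ht_le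

lemma hkNumber_sum_X_succ_sq_le_of_not_isUnit_det (hsq : ∀ r : k, IsSquare r) (ha : a.IsSymm)
    (hdet : ¬IsUnit a.det) :
    hkNumber 3 (∑ i : Fin d, (X i.succ : MvPowerSeries (Fin (d + 1)) k) ^ 2) ≤
      hkNumber 3 (X ⬝ᵥ a *ᵥ X) := by
  obtain ⟨L, hL, hcol⟩ := exists_col_zero_mem_maximalIdeal hdet 0
  rw [← idealOfVars_eq_maximalIdeal] at hcol
  have hX : L *ᵥ (L⁻¹ *ᵥ X) = X := by rw [mulVec_mulVec, mul_nonsing_inv _ hL, one_mulVec]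
  have hform := dotProduct_mulVec_mulVec L a (L⁻¹ *ᵥ X)
  rw [hX] at hform
  rw [hform]
  refine hkNumber_sum_X_succ_sq_le_of_col_zero_mem hsq
    (span_range_mulVec (isUnit_nonsing_inv_det L hL) X) ?_ hcol
  rw [IsSymm, transpose_mul, transpose_mul, transpose_transpose, ha.eq, Matrix.mul_assoc]

lemma one_add_two_thirds_pow_le_liminf {n : ℕ} {F : MvPowerSeries (Fin (n + 1 + 1)) k}
    (hF : F ≠ 0)
    (hle : hkNumber 3 (∑ i : Fin (n + 1), (X i.succ : MvPowerSeries (Fin (n + 1 + 1)) k) ^ 2) ≤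
      hkNumber 3 F) :
    1 + (2 / 3 : ℝ) ^ n ≤ Filter.liminf
      (fun e : ℕ => (hkNumber (3 ^ e) F : ℝ) / 3 ^ ((n + 1) * e)) Filter.atTop := by
  have hbound : 3 * (3 ^ n + 2 ^ n) ≤ hkNumber 3 F :=
    (Nat.mul_le_mul_left 3 (le_hkNumber_sumSq n).1).trans ((mul_hkNumber_sumSq_le 3).trans hle)
  calc 1 + (2 / 3 : ℝ) ^ n = ((3 * (3 ^ n + 2 ^ n) : ℕ) : ℝ) / 3 ^ ((n + 1) * 1) := by
        rw [div_pow, mul_one, pow_succ]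
        push_cast
        field_simp
    _ ≤ hkNumber 3 F / 3 ^ ((n + 1) * 1) := by gcongr
    _ ≤ _ := hkNumber_div_le_liminf 3 (Fintype.card_fin _) hF 1

end CharThree

end QuadraticForms

end HilbertKunz

open HilbertKunz in
theorem hypersurface_dichotomy_char_three_general (k : Type*) [Field k] [CharP k 3]
    (hsq : ∀ r : k, IsSquare r) (d : ℕ) (hd : 1 ≤ d) (F : MvPowerSeries (Fin (d + 1)) k)
    (hF2 : F ∈ (Ideal.span
      (Set.range (X : Fin (d + 1) → MvPowerSeries (Fin (d + 1)) k))) ^ 2)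
    (hF0 : F ≠ 0) :
    Nonempty ((MvPowerSeries (Fin (d + 1)) k ⧸ Ideal.span {F}) ≃+*
      (MvPowerSeries (Fin (d + 1)) k ⧸
        Ideal.span {∑ i : Fin (d + 1), (X i : MvPowerSeries (Fin (d + 1)) k) ^ 2})) ∨
    Filter.liminf (fun e : ℕ => (HKps k d 3 e F : ℝ) / 3 ^ (d * e)) Filter.atTop ≥
      1 + (2 / 3 : ℝ) ^ (d - 1) := by
  have htwo := isUnit_two_of_charP_three k
  obtain ⟨a, ha, rfl⟩ := exists_isSymm_dotProduct_mulVec_eq (isUnit_two_mvPowerSeries _ htwo) hF2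
  by_cases hdet : IsUnit a.det
  · left
    obtain ⟨φ, hφ⟩ := exists_algEquiv_sumSq_eq htwo hsq ha hdet
    refine ⟨(Ideal.quotientEquiv _ _ φ.toRingEquiv ?_).symm⟩
    rw [Ideal.map_span, Set.image_singleton, ← hφ]
    rfl
  · right
    obtain ⟨n, rfl⟩ := Nat.exists_eq_add_of_le' hd
    simp only [HKps_eq_hkNumber, add_tsub_cancel_right]
    exact one_add_two_thirds_pow_le_liminf hF0
      (hkNumber_sum_X_succ_sq_le_of_not_isUnit_det hsq ha hdet)

/-- A non-regular hypersurface ring of dimension `d ≥ 2` in characteristic 3 is either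
isomorphic to the `A₁` singularity `x_0² + ⋯ + x_d²`, or its (lim inf normalized)
Hilbert–Kunz function is bounded below by `e_HK(S_{3,d}) = 1 + (2/3)^{d−1}`. -/
theorem hypersurface_dichotomy_char_three (k : Type*) [Field k] [IsAlgClosed k] [CharP k 3]
    (d : ℕ) (hd : 2 ≤ d) (F : MvPowerSeries (Fin (d + 1)) k)
    (hF2 : F ∈ (Ideal.span
      (Set.range (X : Fin (d + 1) → MvPowerSeries (Fin (d + 1)) k))) ^ 2)
    (hF0 : F ≠ 0) :
    Nonempty ((MvPowerSeries (Fin (d + 1)) k ⧸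
        (Ideal.span {F} : Ideal (MvPowerSeries (Fin (d + 1)) k))) ≃+*
      (MvPowerSeries (Fin (d + 1)) k ⧸
        (Ideal.span {∑ i : Fin (d + 1),
          (X i : MvPowerSeries (Fin (d + 1)) k) ^ 2} :
          Ideal (MvPowerSeries (Fin (d + 1)) k)))) ∨
    Filter.liminf (fun e : ℕ => (HKps k d 3 e F : ℝ) / 3 ^ (d * e)) Filter.atTop ≥
      1 + (2 / 3 : ℝ) ^ (d - 1) :=
  hypersurface_dichotomy_char_three_general k
    (fun r => (IsAlgClosed.exists_pow_nat_eq r two_pos).imp fun s hs => by rw [← hs, sq])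
    d (one_le_two.trans hd) F hF2 hF0
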